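/- (Proposition 2: conditional Hölder stability for the linearized source problem.) Under the assumptions of the context, there exist constants C > 0, θ₁ ∈ (0,1) and ε ∈ (0,T), depending on n, T, M, δ₀, D, R, p₁, H and M₀ but not on y and f, such that if in addition ∫₀^T (sup_{x∈D} |∂_t y(x,t)|)² dt ≤ M₀², then (∫_D |f(x)|² dx)^{1/2} + (∫₀^ε ∫_D (|y(x,t)|² + |∂_t y(x,t)|²) dx dt)^{1/2} ≤ C (d₁^{θ₁} + d₁), where d₁ := (∫₀^T ∫_{B_{ρ₁}} |∂_t y(G₁(x'), t)|² ω₁(x') dx' dt)^{1/2}. -/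

import Mathlib

noncomputable section

open MeasureTheory Metric Set
open scoped RealInnerProductSpace

abbrev Esp (n : ℕ) : Type := EuclideanSpace ℝ (Fin n)

/-- The point `(x', xₙ) ∈ ℝ^{d+1} = ℝ^d × ℝ`. -/
noncomputable def graphMk (d : ℕ) (x' : Esp d) (xn : ℝ) : Esp (d+1) :=
  (EuclideanSpace.equiv (Fin (d+1)) ℝ).symm
    (Fin.snoc (⇑(EuclideanSpace.equiv (Fin d) ℝ) x') xn)

/-- `H` is `(M, δ₀)`-admissible on the compact set `K`. -/
def IsAdmissible {n : ℕ} (M δ₀ : ℝ) (K : Set (Esp n)) (H : Esp n → Esp n) : Prop :=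
  ∃ U : Set (Esp n), IsOpen U ∧ Convex ℝ U ∧ K ⊆ U ∧ ContDiffOn ℝ 1 H U ∧
    (∀ x ∈ U, ‖H x‖ ≤ M) ∧ (∀ x ∈ U, ‖fderiv ℝ H x‖ ≤ M) ∧ (∀ x ∈ K, δ₀ < ‖H x‖)

/-- `ψ_H(x) = ⟨x, H(x)⟩`. -/
noncomputable def psiW {n : ℕ} (H : Esp n → Esp n) (x : Esp n) : ℝ := ⟪x, H x⟫

/-- The Carleman weight `φ_H(x,t) = -βt + ψ_H(x)`. -/
noncomputable def phiW {n : ℕ} (β : ℝ) (H : Esp n → Esp n) (x : Esp n) (t : ℝ) : ℝ :=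
  -(β * t) + psiW H x

/-- Outward unit normal `ν₁` of the upper graph `xₙ = ℓ(x')`. -/
noncomputable def nuUp (d : ℕ) (ℓ : Esp d → ℝ) (x' : Esp d) : Esp (d+1) :=
  (Real.sqrt (1 + ‖gradient ℓ x'‖ ^ 2))⁻¹ • graphMk d (-(gradient ℓ x')) 1

/-- Outward unit normal `ν₂` of the lower graph `xₙ = m(x')`. -/
noncomputable def nuDown (d : ℕ) (m : Esp d → ℝ) (x' : Esp d) : Esp (d+1) :=
  (Real.sqrt (1 + ‖gradient m x'‖ ^ 2))⁻¹ • graphMk d (gradient m x') (-1)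

/-- Area element `ω(x') = √(1 + |∇m(x')|²)` of the graph of `m`. -/
noncomputable def omegaW (d : ℕ) (m : Esp d → ℝ) (x' : Esp d) : ℝ :=
  Real.sqrt (1 + ‖gradient m x'‖ ^ 2)

/-- The graph domain `D = {(x', xₙ) : |x'| < ρ₁, ℓ(x') − ℓ̃(x') < xₙ < ℓ(x')}`. -/
def graphDomain (d : ℕ) (ρ₁ : ℝ) (ℓ ℓt : Esp d → ℝ) : Set (Esp (d+1)) :=
  {x | ∃ x' : Esp d, ∃ xn : ℝ, ‖x'‖ < ρ₁ ∧ ℓ x' - ℓt x' < xn ∧ xn < ℓ x' ∧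
    x = graphMk d x' xn}

/-- The projection `(x', xₙ) ↦ x'`. -/
def initL (d : ℕ) : Esp (d+1) →L[ℝ] Esp d :=
  ((EuclideanSpace.equiv (Fin d) ℝ).symm : (Fin d → ℝ) →L[ℝ] Esp d) ∘L
    ContinuousLinearMap.pi (fun i => EuclideanSpace.proj (Fin.castSucc i))

/-- The projection `(x', xₙ) ↦ xₙ`. -/
def lastL (d : ℕ) : Esp (d+1) →L[ℝ] ℝ := EuclideanSpace.proj (Fin.last d)

@[simp] lemma initL_apply (d : ℕ) (x : Esp (d+1)) (i : Fin d) :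
    initL d x i = x (Fin.castSucc i) := rfl

@[simp] lemma lastL_apply (d : ℕ) (x : Esp (d+1)) : lastL d x = x (Fin.last d) := rfl

@[simp] lemma graphMk_castSucc (d : ℕ) (x' : Esp d) (a : ℝ) (i : Fin d) :
    graphMk d x' a (Fin.castSucc i) = x' i := by
  simp [graphMk]

@[simp] lemma graphMk_last (d : ℕ) (x' : Esp d) (a : ℝ) :
    graphMk d x' a (Fin.last d) = a := by
  simp [graphMk]

@[simp] lemma initL_graphMk (d : ℕ) (x' : Esp d) (a : ℝ) : initL d (graphMk d x' a) = x' := by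
  ext i; simp

lemma lastL_graphMk (d : ℕ) (x' : Esp d) (a : ℝ) : lastL d (graphMk d x' a) = a := by simp

@[simp] lemma graphMk_initL_lastL (d : ℕ) (x : Esp (d+1)) :
    graphMk d (initL d x) (lastL d x) = x := by
  ext i
  induction i using Fin.lastCases <;> simp

lemma inner_graphMk (d : ℕ) (v : Esp (d+1)) (a : Esp d) (b : ℝ) :
    ⟪v, graphMk d a b⟫ = ⟪initL d v, a⟫ + lastL d v * b := by
  simp [PiLp.inner_apply, Fin.sum_univ_castSucc, mul_comm]

lemma norm_sq_graphMk (d : ℕ) (a : Esp d) (b : ℝ) :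
    ‖graphMk d a b‖ ^ 2 = ‖a‖ ^ 2 + b ^ 2 := by
  simp [EuclideanSpace.norm_sq_eq, Fin.sum_univ_castSucc]

lemma dist_graphMk_same (d : ℕ) (a : Esp d) (b c : ℝ) :
    dist (graphMk d a b) (graphMk d a c) = |b - c| := by
  rw [EuclideanSpace.dist_eq, Fin.sum_univ_castSucc]
  simp [Real.dist_eq, Real.sqrt_sq_eq_abs]

lemma continuous_graphMk (d : ℕ) :
    Continuous (fun p : Esp d × ℝ => graphMk d p.1 p.2) := by
  unfold graphMk
  refine (ContinuousLinearEquiv.continuous _).comp ?_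
  refine Continuous.finSnoc ?_ continuous_snd
  exact (ContinuousLinearEquiv.continuous _).comp continuous_fst

/-- The splitting `ℝ^d × ℝ ≃ ℝ^{d+1}` as a homeomorphism. -/
def graphMkHomeo (d : ℕ) : (Esp d × ℝ) ≃ₜ Esp (d+1) where
  toFun p := graphMk d p.1 p.2
  invFun x := (initL d x, lastL d x)
  left_inv p := by simp
  right_inv x := by simp only [graphMk_initL_lastL]
  continuous_toFun := continuous_graphMk d
  continuous_invFun := (initL d).continuous.prodMk (lastL d).continuous

lemma measurePreserving_graphMk (d : ℕ) :
    MeasurePreserving (fun p : Esp d × ℝ => graphMk d p.1 p.2) := by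
  have h1 := PiLp.volume_preserving_toLp (Fin (d+1))
  have h2 := (volume_preserving_piFinSuccAbove (fun _ : Fin (d+1) => ℝ) (Fin.last d)).symm
  have h3 : MeasurePreserving (Prod.swap : (Fin d → ℝ) × ℝ → ℝ × (Fin d → ℝ)) :=
    Measure.measurePreserving_swap
  have h4 := (PiLp.volume_preserving_ofLp (Fin d)).prod (MeasurePreserving.id (volume : Measure ℝ))
  have h5 := h1.comp (h2.comp (h3.comp h4))
  have h6 : (fun p : Esp d × ℝ => graphMk d p.1 p.2) = WithLp.toLp 2 ∘
      (MeasurableEquiv.piFinSuccAbove (fun _ : Fin (d+1) => ℝ) (Fin.last d)).symm ∘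
        Prod.swap ∘ Prod.map WithLp.ofLp id := by
    ext p i
    induction i using Fin.lastCases <;>
      simp [MeasurableEquiv.piFinSuccAbove, Fin.insertNthEquiv, Fin.insertNth_last']
  rw [h6]
  exact h5

lemma measurableEmbedding_graphMk (d : ℕ) :
    MeasurableEmbedding (fun p : Esp d × ℝ => graphMk d p.1 p.2) :=
  (graphMkHomeo d).measurableEmbedding

section GraphDomain

variable {d : ℕ} {ρ₁ : ℝ} {ℓ ℓt : Esp d → ℝ}

lemma mem_graphDomain {x : Esp (d+1)} :
    x ∈ graphDomain d ρ₁ ℓ ℓt ↔ ‖initL d x‖ < ρ₁ ∧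
      ℓ (initL d x) - ℓt (initL d x) < lastL d x ∧ lastL d x < ℓ (initL d x) := by
  constructor
  · rintro ⟨x', a, h1, h2, h3, rfl⟩
    rw [initL_graphMk, lastL_graphMk]
    exact ⟨h1, h2, h3⟩
  · rintro ⟨h1, h2, h3⟩
    exact ⟨_, _, h1, h2, h3, (graphMk_initL_lastL d x).symm⟩

lemma graphMk_mem_graphDomain {x' : Esp d} {a : ℝ} :
    graphMk d x' a ∈ graphDomain d ρ₁ ℓ ℓt ↔ ‖x'‖ < ρ₁ ∧ ℓ x' - ℓt x' < a ∧ a < ℓ x' := by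
  rw [mem_graphDomain, initL_graphMk, lastL_graphMk]

lemma isOpen_graphDomain (hℓ : ContinuousOn ℓ (closedBall 0 ρ₁))
    (hℓt : ContinuousOn ℓt (closedBall 0 ρ₁)) : IsOpen (graphDomain d ρ₁ ℓ ℓt) := by
  rw [isOpen_iff_mem_nhds]
  intro x hx
  obtain ⟨h1, h2, h3⟩ := mem_graphDomain.1 hx
  have hball : closedBall (0 : Esp d) ρ₁ ∈ nhds (initL d x) :=
    Filter.mem_of_superset (isOpen_ball.mem_nhds (by simpa using h1)) ball_subset_closedBall
  have c1 : ContinuousAt (fun z => ℓ (initL d z)) x :=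
    ContinuousAt.comp (hℓ.continuousAt hball) (initL d).continuous.continuousAt
  have c2 : ContinuousAt (fun z => ℓt (initL d z)) x :=
    ContinuousAt.comp (hℓt.continuousAt hball) (initL d).continuous.continuousAt
  have c3 : ContinuousAt (fun z => lastL d z) x := (lastL d).continuous.continuousAt
  have c4 : ContinuousAt (fun z => ‖initL d z‖) x := (initL d).continuous.norm.continuousAt
  filter_upwards [c4.eventually_lt continuousAt_const h1, (c1.sub c2).eventually_lt c3 h2,
    c3.eventually_lt c1 h3] with z z1 z2 z3
  exact mem_graphDomain.2 ⟨z1, z2, z3⟩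

lemma isBounded_graphDomain (hℓ : ContinuousOn ℓ (closedBall 0 ρ₁))
    (hℓt : ContinuousOn ℓt (closedBall 0 ρ₁)) :
    Bornology.IsBounded (graphDomain d ρ₁ ℓ ℓt) := by
  have hK : IsCompact (closedBall (0 : Esp d) ρ₁) := isCompact_closedBall _ _
  obtain ⟨A, hA⟩ := hK.exists_bound_of_continuousOn hℓ
  obtain ⟨B, hB⟩ := hK.exists_bound_of_continuousOn (hℓ.sub hℓt)
  have : IsCompact ((fun p : Esp d × ℝ => graphMk d p.1 p.2) ''
      (closedBall 0 ρ₁ ×ˢ Icc (-B) A)) :=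
    (hK.prod isCompact_Icc).image (continuous_graphMk d)
  refine this.isBounded.subset ?_
  rintro x ⟨x', a, h1, h2, h3, rfl⟩
  have hx' : x' ∈ closedBall (0 : Esp d) ρ₁ := by simpa using h1.le
  refine ⟨(x', a), ⟨hx', ?_, ?_⟩, rfl⟩
  · have := (abs_le.1 (hB x' hx')).1
    simp only [Pi.sub_apply] at this
    exact this.trans h2.le
  · exact h3.le.trans ((le_abs_self _).trans (hA x' hx'))

/-- The closed vertical segments over the open ball lie in the closure of the graph domain. -/
lemma graphMk_mem_closure_graphDomain {x' : Esp d} {a : ℝ} (hx' : ‖x'‖ < ρ₁) (hpos : 0 < ℓt x')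
    (h1 : ℓ x' - ℓt x' ≤ a) (h2 : a ≤ ℓ x') :
    graphMk d x' a ∈ closure (graphDomain d ρ₁ ℓ ℓt) := by
  have hc : Continuous (fun b : ℝ => graphMk d x' b) :=
    (continuous_graphMk d).comp (Continuous.prodMk_right x')
  have hsub : (fun b : ℝ => graphMk d x' b) '' Ioo (ℓ x' - ℓt x') (ℓ x') ⊆
      graphDomain d ρ₁ ℓ ℓt := by
    rintro _ ⟨b, hb, rfl⟩
    exact graphMk_mem_graphDomain.2 ⟨hx', hb.1, hb.2⟩
  refine closure_mono hsub (image_closure_subset_closure_image hc ⟨a, ?_, rfl⟩)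
  rw [closure_Ioo (by linarith)]
  exact ⟨h1, h2⟩

/-- Fubini's theorem on a graph domain. -/
lemma setIntegral_graphDomain (hD : MeasurableSet (graphDomain d ρ₁ ℓ ℓt))
    {h : Esp (d+1) → ℝ} (hh : IntegrableOn h (graphDomain d ρ₁ ℓ ℓt)) :
    ∫ x in graphDomain d ρ₁ ℓ ℓt, h x = ∫ x' in ball (0 : Esp d) ρ₁,
      ∫ a in Ioo (ℓ x' - ℓt x') (ℓ x'), h (graphMk d x' a) := by
  have h_int : Integrable ((graphDomain d ρ₁ ℓ ℓt).indicator h) := hh.integrable_indicator hD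
  rw [← integral_indicator hD, ← (measurePreserving_graphMk d).integral_comp
    (measurableEmbedding_graphMk d)]
  rw [show (volume : Measure (Esp d × ℝ)) = volume.prod volume from rfl]
  rw [integral_prod, ← integral_indicator measurableSet_ball]
  · congr 1
    ext x'
    by_cases hx' : x' ∈ ball (0 : Esp d) ρ₁
    · rw [indicator_of_mem hx', ← integral_indicator measurableSet_Ioo]
      congr 1
      ext a
      have hn : ‖x'‖ < ρ₁ := by simpa using hx'
      simp only [indicator, graphMk_mem_graphDomain, hn, true_and, mem_Ioo]
    · rw [indicator_of_notMem hx']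
      have hn : ¬ ‖x'‖ < ρ₁ := by simpa using hx'
      simp [indicator, graphMk_mem_graphDomain, hn]
  · exact ((measurePreserving_graphMk d).integrable_comp_emb
      (measurableEmbedding_graphMk d)).2 h_int

/-- Integration against a density of vertical mass at most one. -/
lemma setIntegral_graphDomain_mul_le (hD : MeasurableSet (graphDomain d ρ₁ ℓ ℓt))
    {a : Esp d → ℝ} {q : Esp (d+1) → ℝ}
    (ha : IntegrableOn a (ball 0 ρ₁)) (ha0 : ∀ x' ∈ ball (0 : Esp d) ρ₁, 0 ≤ a x')
    (hq0 : ∀ x, 0 ≤ q x)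
    (h_int : IntegrableOn (fun x => a (initL d x) * q x) (graphDomain d ρ₁ ℓ ℓt))
    (hq : ∀ x' ∈ ball (0 : Esp d) ρ₁,
      ∫ b in Ioo (ℓ x' - ℓt x') (ℓ x'), q (graphMk d x' b) ≤ 1) :
    ∫ x in graphDomain d ρ₁ ℓ ℓt, a (initL d x) * q x ≤ ∫ x' in ball (0 : Esp d) ρ₁, a x' := by
  rw [setIntegral_graphDomain hD h_int]
  refine integral_mono_of_nonneg ?_ ha ?_
  · filter_upwards [ae_restrict_mem measurableSet_ball] with x' hx'
    refine integral_nonneg fun b => ?_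
    rw [initL_graphMk]
    exact mul_nonneg (ha0 x' hx') (hq0 _)
  · filter_upwards [ae_restrict_mem measurableSet_ball] with x' hx'
    simp only [initL_graphMk]
    rw [integral_const_mul]
    exact mul_le_of_le_one_right (ha0 x' hx') (hq x' hx')

end GraphDomain

/-- The divergence of a vector field on `ℝⁿ`. -/
def divergenceE {n : ℕ} (H : Esp n → Esp n) (x : Esp n) : ℝ :=
  ∑ j, (fderiv ℝ H x (EuclideanSpace.single j 1)) j

lemma abs_divergenceE_le {n : ℕ} {H : Esp n → Esp n} {x : Esp n} {M : ℝ}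
    (h : ‖fderiv ℝ H x‖ ≤ M) : |divergenceE H x| ≤ n * M := by
  unfold divergenceE
  refine (Finset.abs_sum_le_sum_abs _ _).trans ?_
  have : ∀ j ∈ (Finset.univ : Finset (Fin n)),
      |(fderiv ℝ H x (EuclideanSpace.single j 1)) j| ≤ M := by
    intro j _
    refine (PiLp.norm_apply_le (fderiv ℝ H x (EuclideanSpace.single j 1)) j).trans ?_
    refine ((fderiv ℝ H x).le_opNorm _).trans ?_
    simpa using h
  refine (Finset.sum_le_sum this).trans ?_
  simp

lemma integral_fderiv_eq_zero_of_hasCompactSupport {n : ℕ} {F : Esp n → ℝ}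
    (hF : ContDiff ℝ 1 F) (hs : HasCompactSupport F) (v : Esp n) :
    ∫ x, fderiv ℝ F x v = 0 := by
  have hc : Continuous (fun x => fderiv ℝ F x v) :=
    (hF.continuous_fderiv one_ne_zero).clm_apply continuous_const
  have hi : Integrable (fun x => fderiv ℝ F x v) :=
    hc.integrable_of_hasCompactSupport (hs.fderiv_apply (𝕜 := ℝ) v)
  have hi' : Integrable F := hF.continuous.integrable_of_hasCompactSupport hs
  have := integral_mul_fderiv_eq_neg_fderiv_mul_of_integrable (μ := volume) (f := F)
    (g := fun _ => (1 : ℝ)) (v := v) (by simpa using hi) (by simp) (by simpa using hi')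
    (fun x _ => hF.differentiable one_ne_zero x) (fun x _ => differentiableAt_const _)
  simpa using this

/-- The divergence theorem for `η g H` when the cutoff `η` vanishes off a compact subset of
the open set on which all three factors are `C¹`. -/
lemma setIntegral_divergence_cutoff {n : ℕ} {D K : Set (Esp n)} (hD : IsOpen D)
    (hK : IsCompact K) (hKD : K ⊆ D) {H : Esp n → Esp n} {g η : Esp n → ℝ}
    (hH : ContDiffOn ℝ 1 H D) (hg : ContDiffOn ℝ 1 g D) (hη : ContDiffOn ℝ 1 η D)
    (hηK : ∀ x ∈ D, x ∉ K → η x = 0) :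
    IntegrableOn (fun x => g x * fderiv ℝ η x (H x) +
      η x * (fderiv ℝ g x (H x) + g x * divergenceE H x)) D ∧
    ∫ x in D, (g x * fderiv ℝ η x (H x) +
      η x * (fderiv ℝ g x (H x) + g x * divergenceE H x)) = 0 := by
  let G : Fin n → Esp n → ℝ := fun j => D.indicator (fun x => η x * g x * H x j)
  have hGK : ∀ j x, x ∉ K → G j x = 0 := by
    intro j x hx
    by_cases hxD : x ∈ D
    · simp [G, indicator_of_mem hxD, hηK x hxD hx]
    · simp [G, indicator_of_notMem hxD]
  have hHj : ∀ j, ContDiffOn ℝ 1 (fun x => H x j) D := fun j =>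
    (EuclideanSpace.proj (𝕜 := ℝ) j : Esp n →L[ℝ] ℝ).contDiff.comp_contDiffOn hH
  have hGloc : ∀ j, ∀ x ∈ D, G j =ᶠ[nhds x] fun x => η x * g x * H x j := by
    intro j x hx
    filter_upwards [hD.mem_nhds hx] with z hz
    simp [G, indicator_of_mem hz]
  have hG : ∀ j, ContDiff ℝ 1 (G j) := by
    intro j
    rw [contDiff_iff_contDiffAt]
    intro x
    by_cases hx : x ∈ D
    · exact (((hη.mul hg).mul (hHj j)).contDiffAt (hD.mem_nhds hx)).congr_of_eventuallyEq
        (hGloc j x hx)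
    · have : G j =ᶠ[nhds x] fun _ => 0 := by
        filter_upwards [hK.isClosed.isOpen_compl.mem_nhds (fun h => hx (hKD h))] with z hz
        exact hGK j z hz
      exact contDiffAt_const.congr_of_eventuallyEq this
  have hGs : ∀ j, HasCompactSupport (G j) := fun j => HasCompactSupport.intro hK (hGK j)
  have hderiv : ∀ x ∈ D, ∑ j, fderiv ℝ (G j) x (EuclideanSpace.single j 1) =
      g x * fderiv ℝ η x (H x) + η x * (fderiv ℝ g x (H x) + g x * divergenceE H x) := by
    intro x hx
    have dη : DifferentiableAt ℝ η x :=
      (hη.contDiffAt (hD.mem_nhds hx)).differentiableAt one_ne_zero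
    have dg : DifferentiableAt ℝ g x :=
      (hg.contDiffAt (hD.mem_nhds hx)).differentiableAt one_ne_zero
    have dH : DifferentiableAt ℝ H x :=
      (hH.contDiffAt (hD.mem_nhds hx)).differentiableAt one_ne_zero
    have key : ∀ j, fderiv ℝ (G j) x (EuclideanSpace.single j 1) =
        η x * g x * (fderiv ℝ H x (EuclideanSpace.single j 1)) j +
        H x j * (η x * fderiv ℝ g x (EuclideanSpace.single j 1) +
          g x * fderiv ℝ η x (EuclideanSpace.single j 1)) := by
      intro j
      have dHj : HasFDerivAt (fun x => H x j)
          ((EuclideanSpace.proj (𝕜 := ℝ) j : Esp n →L[ℝ] ℝ) ∘L fderiv ℝ H x) x :=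
        (EuclideanSpace.proj (𝕜 := ℝ) j : Esp n →L[ℝ] ℝ).hasFDerivAt.comp x dH.hasFDerivAt
      have h1 := (dη.hasFDerivAt.mul dg.hasFDerivAt).mul dHj
      rw [(hGloc j x hx).fderiv_eq]
      rw [show (fun x => η x * g x * H x j) = (η * g) * (fun x => H x j) from rfl, h1.fderiv]
      simp [mul_add]
    have hsum : ∀ L : Esp n →L[ℝ] ℝ,
        ∑ j, H x j * L (EuclideanSpace.single j 1) = L (H x) := by
      intro L
      have : H x = ∑ j, (H x j) • (EuclideanSpace.single j (1 : ℝ) : Esp n) := by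
        ext i
        simp [Pi.single_apply]
      conv_rhs => rw [this]
      simp
    simp only [key, Finset.sum_add_distrib, divergenceE, mul_add, ← Finset.mul_sum]
    have h1 := hsum (fderiv ℝ g x)
    have h2 := hsum (fderiv ℝ η x)
    have h3 : ∑ j, H x j * (η x * fderiv ℝ g x (EuclideanSpace.single j 1)) =
        η x * fderiv ℝ g x (H x) := by
      rw [← h1, Finset.mul_sum]; exact Finset.sum_congr rfl fun j _ => by ring
    have h4 : ∑ j, H x j * (g x * fderiv ℝ η x (EuclideanSpace.single j 1)) =
        g x * fderiv ℝ η x (H x) := by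
      rw [← h2, Finset.mul_sum]; exact Finset.sum_congr rfl fun j _ => by ring
    rw [h3, h4]
    ring
  have h_int : ∀ j, Integrable (fun x => fderiv ℝ (G j) x (EuclideanSpace.single j 1)) := by
    intro j
    exact (((hG j).continuous_fderiv one_ne_zero).clm_apply
      continuous_const).integrable_of_hasCompactSupport ((hGs j).fderiv_apply (𝕜 := ℝ) _)
  have hsum0 : ∀ x, x ∉ D → ∑ j, fderiv ℝ (G j) x (EuclideanSpace.single j 1) = 0 := by
    intro x hx
    refine Finset.sum_eq_zero fun j _ => ?_
    have : G j =ᶠ[nhds x] fun _ => 0 := by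
      filter_upwards [hK.isClosed.isOpen_compl.mem_nhds (fun h => hx (hKD h))] with z hz
      exact hGK j z hz
    rw [this.fderiv_eq]
    simp
  have hI : Integrable (fun x => ∑ j, fderiv ℝ (G j) x (EuclideanSpace.single j 1)) :=
    integrable_finsetSum _ fun j _ => h_int j
  constructor
  · exact (hI.integrableOn (s := D)).congr_fun (fun x hx => hderiv x hx) hD.measurableSet
  · rw [← setIntegral_congr_fun hD.measurableSet (fun x hx => hderiv x hx),
      setIntegral_eq_integral_of_forall_compl_eq_zero hsum0,
      integral_finsetSum _ fun j _ => h_int j]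
    exact Finset.sum_eq_zero fun j _ =>
      integral_fderiv_eq_zero_of_hasCompactSupport (hG j) (hGs j) _

/-- A smooth cutoff of the half line, rising from `0` to `1` on `[1/k, 2/k]`. -/
def rampCutoff (k r : ℝ) : ℝ := Real.smoothTransition (k * r - 1)

lemma contDiff_rampCutoff (k : ℝ) : ContDiff ℝ 1 (rampCutoff k) :=
  (Real.smoothTransition.contDiff (n := 1)).comp (by fun_prop)

lemma rampCutoff_nonneg (k r : ℝ) : 0 ≤ rampCutoff k r := Real.smoothTransition.nonneg _

lemma rampCutoff_le_one (k r : ℝ) : rampCutoff k r ≤ 1 := Real.smoothTransition.le_one _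

lemma rampCutoff_eq_zero {k r : ℝ} (h : k * r ≤ 1) : rampCutoff k r = 0 :=
  Real.smoothTransition.zero_of_nonpos (by linarith)

lemma rampCutoff_eq_one {k r : ℝ} (h : 2 ≤ k * r) : rampCutoff k r = 1 :=
  Real.smoothTransition.one_of_one_le (by linarith)

lemma continuous_deriv_rampCutoff (k : ℝ) : Continuous (deriv (rampCutoff k)) :=
  (contDiff_rampCutoff k).continuous_deriv le_rfl

lemma deriv_rampCutoff_nonneg {k : ℝ} (hk : 0 < k) (r : ℝ) : 0 ≤ deriv (rampCutoff k) r := by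
  refine Monotone.deriv_nonneg fun a b hab => Real.smoothTransition.monotone ?_
  have := mul_le_mul_of_nonneg_left hab hk.le
  linarith

lemma deriv_rampCutoff_eq_zero {k r : ℝ} (h : 2 < k * r) : deriv (rampCutoff k) r = 0 := by
  have : rampCutoff k =ᶠ[nhds r] fun _ => 1 := by
    have hc : ContinuousAt (fun r : ℝ => k * r) r := by fun_prop
    filter_upwards [hc.eventually (lt_mem_nhds h)] with z hz
    exact rampCutoff_eq_one hz.le
  rw [this.deriv_eq]
  simp

lemma exists_bound_deriv_rampCutoff {k : ℝ} (hk : 0 < k) :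
    ∃ C, ∀ r, 0 ≤ r → |deriv (rampCutoff k) r| ≤ C := by
  obtain ⟨C, hC⟩ := (isCompact_Icc (a := (0 : ℝ)) (b := 2 / k)).exists_bound_of_continuousOn
    (continuous_deriv_rampCutoff k).continuousOn
  refine ⟨max C 0, fun r hr => ?_⟩
  rcases le_or_gt r (2 / k) with h | h
  · exact (hC r ⟨hr, h⟩).trans (le_max_left _ _)
  · rw [deriv_rampCutoff_eq_zero (by rw [div_lt_iff₀ hk] at h; linarith)]
    simp

lemma integral_deriv_rampCutoff_le (k : ℝ) (a b : ℝ) :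
    ∫ r in a..b, deriv (rampCutoff k) r ≤ 1 := by
  rw [intervalIntegral.integral_deriv_eq_sub
    (fun x _ => (contDiff_rampCutoff k).differentiable one_ne_zero x)
    ((continuous_deriv_rampCutoff k).intervalIntegrable _ _)]
  linarith [rampCutoff_le_one k b, rampCutoff_nonneg k a]

lemma setIntegral_deriv_rampCutoff_sub_left_le (k c a b : ℝ) (hab : a ≤ b) :
    ∫ r in Ioo a b, deriv (rampCutoff k) (c - r) ≤ 1 := by
  rw [← integral_Ioc_eq_integral_Ioo, ← intervalIntegral.integral_of_le hab,
    intervalIntegral.integral_comp_sub_left]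
  exact integral_deriv_rampCutoff_le _ _ _

lemma setIntegral_deriv_rampCutoff_sub_right_le (k c a b : ℝ) (hab : a ≤ b) :
    ∫ r in Ioo a b, deriv (rampCutoff k) (r - c) ≤ 1 := by
  rw [← integral_Ioc_eq_integral_Ioo, ← intervalIntegral.integral_of_le hab,
    intervalIntegral.integral_comp_sub_right]
  exact integral_deriv_rampCutoff_le _ _ _

lemma integrableOn_of_continuousOn_of_bounded {n : ℕ} {D : Set (Esp n)} (hD : IsOpen D)
    (hb : Bornology.IsBounded D) {f : Esp n → ℝ} (hf : ContinuousOn f D) {C : ℝ}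
    (hC : ∀ x ∈ D, |f x| ≤ C) : IntegrableOn f D := by
  have : IsFiniteMeasure (volume.restrict D) := ⟨by simpa using hb.measure_lt_top⟩
  refine Integrable.of_bound (hf.aestronglyMeasurable hD.measurableSet) C ?_
  filter_upwards [ae_restrict_mem hD.measurableSet] with x hx
  exact hC x hx

lemma norm_gradient {n : ℕ} (f : Esp n → ℝ) (x : Esp n) :
    ‖gradient f x‖ = ‖fderiv ℝ f x‖ := by
  rw [← toDual_gradient, LinearIsometryEquiv.norm_map]

lemma norm_initL_apply_le (d : ℕ) (v : Esp (d+1)) : ‖initL d v‖ ≤ ‖v‖ := by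
  have := norm_sq_graphMk d (initL d v) (lastL d v)
  rw [graphMk_initL_lastL] at this
  exact le_of_sq_le_sq (by nlinarith [sq_nonneg (lastL d v)]) (norm_nonneg _)

lemma abs_lastL_apply_le (d : ℕ) (v : Esp (d+1)) : |lastL d v| ≤ ‖v‖ := by
  have := norm_sq_graphMk d (initL d v) (lastL d v)
  rw [graphMk_initL_lastL] at this
  refine le_of_sq_le_sq ?_ (norm_nonneg _)
  rw [sq_abs]
  nlinarith [sq_nonneg ‖initL d v‖]

lemma one_le_omegaW (d : ℕ) (m : Esp d → ℝ) (x' : Esp d) : 1 ≤ omegaW d m x' := by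
  unfold omegaW
  rw [Real.one_le_sqrt]
  nlinarith [sq_nonneg ‖gradient m x'‖]

lemma omegaW_nonneg (d : ℕ) (m : Esp d → ℝ) (x' : Esp d) : 0 ≤ omegaW d m x' :=
  zero_le_one.trans (one_le_omegaW d m x')

/-- The flux of `v` through the upper graph is at most `|v| ω`. -/
lemma lastL_sub_fderiv_le (d : ℕ) (m : Esp d → ℝ) (x' : Esp d) (v : Esp (d+1)) :
    lastL d v - fderiv ℝ m x' (initL d v) ≤ ‖v‖ * omegaW d m x' := by
  have h1 : lastL d v - fderiv ℝ m x' (initL d v) = ⟪v, graphMk d (-(gradient m x')) 1⟫ := by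
    rw [inner_graphMk, inner_neg_right, real_inner_comm, inner_gradient_left]
    ring
  have h2 : ‖graphMk d (-(gradient m x')) 1‖ = omegaW d m x' := by
    rw [omegaW, eq_comm, Real.sqrt_eq_iff_mul_self_eq (by positivity) (norm_nonneg _), ← sq,
      norm_sq_graphMk]
    simp [add_comm]
  rw [h1, ← h2]
  exact real_inner_le_norm _ _

lemma fderiv_sub_lastL_nonpos_of_inner_nuDown (d : ℕ) (m : Esp d → ℝ) (x' : Esp d)
    (v : Esp (d+1)) (h : ⟪v, nuDown d m x'⟫ ≤ 0) :
    fderiv ℝ m x' (initL d v) - lastL d v ≤ 0 := by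
  unfold nuDown at h
  rw [inner_smul_right, inner_graphMk, real_inner_comm, inner_gradient_left] at h
  have hpos : 0 < (Real.sqrt (1 + ‖gradient m x'‖ ^ 2))⁻¹ := by positivity
  have := nonpos_of_mul_nonpos_right h hpos
  linarith

section BallRegularity

variable {d : ℕ} {ρ : ℝ} {m : Esp d → ℝ}

lemma exists_bound_fderiv_ball (hρ : 0 < ρ) (hm : ContDiffOn ℝ 1 m (closedBall 0 ρ)) :
    ∃ L, 0 ≤ L ∧ ∀ x' ∈ ball (0 : Esp d) ρ, ‖fderiv ℝ m x'‖ ≤ L := by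
  have hu : UniqueDiffOn ℝ (closedBall (0 : Esp d) ρ) := by
    refine uniqueDiffOn_convex (convex_closedBall _ _) ⟨0, ?_⟩
    exact ball_subset_interior_closedBall (mem_ball_self hρ)
  obtain ⟨L, hL⟩ := (isCompact_closedBall (0 : Esp d) ρ).exists_bound_of_continuousOn
    (hm.continuousOn_fderivWithin hu le_rfl)
  refine ⟨max L 0, le_max_right _ _, fun x' hx' => ?_⟩
  rw [← fderivWithin_of_mem_nhds (Filter.mem_of_superset (isOpen_ball.mem_nhds hx')
    ball_subset_closedBall)]
  exact (hL x' (ball_subset_closedBall hx')).trans (le_max_left _ _)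

lemma continuousOn_omegaW (hm : ContDiffOn ℝ 1 m (closedBall 0 ρ)) :
    ContinuousOn (omegaW d m) (ball 0 ρ) := by
  have h := (hm.mono ball_subset_closedBall).continuousOn_fderiv_of_isOpen isOpen_ball le_rfl
  have : omegaW d m = fun x' => Real.sqrt (1 + ‖fderiv ℝ m x'‖ ^ 2) := by
    ext x'
    rw [omegaW, norm_gradient]
  rw [this]
  fun_prop

lemma omegaW_le {x' : Esp d} {L : ℝ} (hL : ‖fderiv ℝ m x'‖ ≤ L) : omegaW d m x' ≤ 1 + L := by
  have h0 := norm_nonneg (fderiv ℝ m x')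
  rw [omegaW, norm_gradient, Real.sqrt_le_left (by linarith)]
  nlinarith

end BallRegularity

/-- The product cutoff of a graph domain, vanishing near both graphs. -/
def graphCutoff (d : ℕ) (ℓ ℓt : Esp d → ℝ) (k : ℝ) (x : Esp (d+1)) : ℝ :=
  rampCutoff k (ℓ (initL d x) - lastL d x) *
    rampCutoff k (lastL d x - (ℓ (initL d x) - ℓt (initL d x)))

section Transport

variable {d : ℕ} {ρ₁ : ℝ} {ℓ ℓt : Esp d → ℝ}

lemma graphCutoff_nonneg (k : ℝ) (x : Esp (d+1)) : 0 ≤ graphCutoff d ℓ ℓt k x :=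
  mul_nonneg (rampCutoff_nonneg _ _) (rampCutoff_nonneg _ _)

lemma graphCutoff_le_one (k : ℝ) (x : Esp (d+1)) : graphCutoff d ℓ ℓt k x ≤ 1 :=
  mul_le_one₀ (rampCutoff_le_one _ _) (rampCutoff_nonneg _ _) (rampCutoff_le_one _ _)

lemma hasFDerivAt_of_mem_graphDomain {m : Esp d → ℝ} (hm : ContDiffOn ℝ 1 m (closedBall 0 ρ₁))
    {x : Esp (d+1)} (hx : x ∈ graphDomain d ρ₁ ℓ ℓt) :
    HasFDerivAt m (fderiv ℝ m (initL d x)) (initL d x) := by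
  have hball : closedBall (0 : Esp d) ρ₁ ∈ nhds (initL d x) :=
    Filter.mem_of_superset (isOpen_ball.mem_nhds (by simpa using (mem_graphDomain.1 hx).1))
      ball_subset_closedBall
  exact ((hm.contDiffAt hball).differentiableAt one_ne_zero).hasFDerivAt

lemma contDiffOn_comp_initL {m : Esp d → ℝ} (hm : ContDiffOn ℝ 1 m (closedBall 0 ρ₁)) :
    ContDiffOn ℝ 1 (fun x => m (initL d x)) (graphDomain d ρ₁ ℓ ℓt) := by
  refine ContDiffOn.comp hm (initL d).contDiff.contDiffOn fun x hx => ?_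
  simpa using (mem_graphDomain.1 hx).1.le

lemma contDiffOn_graphCutoff (hℓ : ContDiffOn ℝ 1 ℓ (closedBall 0 ρ₁))
    (hℓt : ContDiffOn ℝ 1 ℓt (closedBall 0 ρ₁)) (k : ℝ) :
    ContDiffOn ℝ 1 (graphCutoff d ℓ ℓt k) (graphDomain d ρ₁ ℓ ℓt) := by
  have h1 : ContDiffOn ℝ 1 (fun x => ℓ (initL d x)) (graphDomain d ρ₁ ℓ ℓt) :=
    contDiffOn_comp_initL hℓ
  have h2 : ContDiffOn ℝ 1 (fun x => ℓt (initL d x)) (graphDomain d ρ₁ ℓ ℓt) :=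
    contDiffOn_comp_initL hℓt
  have h3 : ContDiffOn ℝ 1 (fun x => lastL d x) (graphDomain d ρ₁ ℓ ℓt) :=
    (lastL d).contDiff.contDiffOn
  exact ((contDiff_rampCutoff k).comp_contDiffOn (h1.sub h3)).mul
    ((contDiff_rampCutoff k).comp_contDiffOn (h3.sub (h1.sub h2)))

lemma fderiv_graphCutoff (hℓ : ContDiffOn ℝ 1 ℓ (closedBall 0 ρ₁))
    (hℓt : ContDiffOn ℝ 1 ℓt (closedBall 0 ρ₁)) (k : ℝ) {x : Esp (d+1)}
    (hx : x ∈ graphDomain d ρ₁ ℓ ℓt) (v : Esp (d+1)) :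
    fderiv ℝ (graphCutoff d ℓ ℓt k) x v =
      rampCutoff k (lastL d x - (ℓ (initL d x) - ℓt (initL d x))) *
        deriv (rampCutoff k) (ℓ (initL d x) - lastL d x) *
          (fderiv ℝ ℓ (initL d x) (initL d v) - lastL d v) +
      rampCutoff k (ℓ (initL d x) - lastL d x) *
        deriv (rampCutoff k) (lastL d x - (ℓ (initL d x) - ℓt (initL d x))) *
          (lastL d v - fderiv ℝ (fun z => ℓ z - ℓt z) (initL d x) (initL d v)) := by
  have h1 := (hasFDerivAt_of_mem_graphDomain hℓ hx).comp x (initL d).hasFDerivAt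
  have h2 := (hasFDerivAt_of_mem_graphDomain (hℓ.sub hℓt) hx).comp x (initL d).hasFDerivAt
  have h3 := (lastL d).hasFDerivAt (x := x)
  have hr : ∀ r, HasDerivAt (rampCutoff k) (deriv (rampCutoff k) r) r := fun r =>
    ((contDiff_rampCutoff k).differentiable one_ne_zero r).hasDerivAt
  have h4 := (hr (ℓ (initL d x) - lastL d x)).comp_hasFDerivAt x (h1.sub h3)
  have h5 := (hr (lastL d x - (ℓ (initL d x) - ℓt (initL d x)))).comp_hasFDerivAt x (h3.sub h2)
  have h6 := h4.mul h5
  have h7 : graphCutoff d ℓ ℓt k = (rampCutoff k ∘ (ℓ ∘ ⇑(initL d) - ⇑(lastL d))) *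
      (rampCutoff k ∘ (⇑(lastL d) - (fun z => ℓ z - ℓt z) ∘ ⇑(initL d))) := rfl
  rw [h7, h6.fderiv]
  simp only [add_apply, smul_apply,
    sub_apply, ContinuousLinearMap.comp_apply, smul_eq_mul,
    Function.comp_apply, Pi.sub_apply]
  ring

/-- The set off which the cutoff of a graph domain vanishes. -/
def graphCore (d : ℕ) (ρ₁ : ℝ) (ℓ ℓt : Esp d → ℝ) (k : ℝ) : Set (Esp (d+1)) :=
  {x | initL d x ∈ closedBall 0 ρ₁ ∧ 1 ≤ k * (ℓ (initL d x) - lastL d x) ∧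
    1 ≤ k * (lastL d x - (ℓ (initL d x) - ℓt (initL d x)))}

lemma graphCore_subset (hℓt0 : ∀ x' : Esp d, ‖x'‖ = ρ₁ → ℓt x' = 0) {k : ℝ} (hk : 0 < k) :
    graphCore d ρ₁ ℓ ℓt k ⊆ graphDomain d ρ₁ ℓ ℓt := by
  rintro x ⟨h1, h2, h3⟩
  have h2' : 0 < ℓ (initL d x) - lastL d x := pos_of_mul_pos_right (by linarith) hk.le
  have h3' : 0 < lastL d x - (ℓ (initL d x) - ℓt (initL d x)) :=
    pos_of_mul_pos_right (by linarith) hk.le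
  have h1' : ‖initL d x‖ ≤ ρ₁ := by simpa using h1
  refine mem_graphDomain.2 ⟨lt_of_le_of_ne h1' fun h => ?_, by linarith, by linarith⟩
  rw [hℓt0 _ h] at h3'
  linarith

lemma isCompact_graphCore (hℓ : ContinuousOn ℓ (closedBall 0 ρ₁))
    (hℓt : ContinuousOn ℓt (closedBall 0 ρ₁))
    (hℓt0 : ∀ x' : Esp d, ‖x'‖ = ρ₁ → ℓt x' = 0) {k : ℝ} (hk : 0 < k) :
    IsCompact (graphCore d ρ₁ ℓ ℓt k) := by
  refine isCompact_of_isClosed_isBounded ?_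
    ((isBounded_graphDomain hℓ hℓt).subset (graphCore_subset hℓt0 hk))
  have hS : IsClosed ((initL d) ⁻¹' closedBall (0 : Esp d) ρ₁) :=
    isClosed_closedBall.preimage (initL d).continuous
  have c1 : ContinuousOn (fun x => ℓ (initL d x)) ((initL d) ⁻¹' closedBall (0 : Esp d) ρ₁) :=
    hℓ.comp (initL d).continuous.continuousOn fun x hx => hx
  have c2 : ContinuousOn (fun x => ℓt (initL d x)) ((initL d) ⁻¹' closedBall (0 : Esp d) ρ₁) :=
    hℓt.comp (initL d).continuous.continuousOn fun x hx => hx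
  have c3 : ContinuousOn (fun x => lastL d x) ((initL d) ⁻¹' closedBall (0 : Esp d) ρ₁) :=
    (lastL d).continuous.continuousOn
  have k1 : ContinuousOn (fun x => k * (ℓ (initL d x) - lastL d x))
      ((initL d) ⁻¹' closedBall (0 : Esp d) ρ₁) := (c1.sub c3).const_smul k
  have k2 : ContinuousOn (fun x => k * (lastL d x - (ℓ (initL d x) - ℓt (initL d x))))
      ((initL d) ⁻¹' closedBall (0 : Esp d) ρ₁) := (c3.sub (c1.sub c2)).const_smul k
  have := (k1.prodMk k2).preimage_isClosed_of_isClosed hS (isClosed_Ici (a := ((1 : ℝ), (1 : ℝ))))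
  exact this

lemma graphCutoff_eq_zero {k : ℝ} {x : Esp (d+1)} (hx : x ∈ graphDomain d ρ₁ ℓ ℓt)
    (hxK : x ∉ graphCore d ρ₁ ℓ ℓt k) : graphCutoff d ℓ ℓt k x = 0 := by
  unfold graphCutoff
  rcases lt_or_ge (k * (ℓ (initL d x) - lastL d x)) 1 with h | h
  · rw [rampCutoff_eq_zero h.le, zero_mul]
  · rcases lt_or_ge (k * (lastL d x - (ℓ (initL d x) - ℓt (initL d x)))) 1 with h' | h'
    · rw [rampCutoff_eq_zero h'.le, mul_zero]
    · exact absurd ⟨by simpa using (mem_graphDomain.1 hx).1.le, h, h'⟩ hxK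

lemma tendsto_graphCutoff {x : Esp (d+1)} (hx : x ∈ graphDomain d ρ₁ ℓ ℓt) :
    Filter.Tendsto (fun n : ℕ => graphCutoff d ℓ ℓt (n + 1 : ℝ) x) Filter.atTop (nhds 1) := by
  obtain ⟨-, h2, h3⟩ := mem_graphDomain.1 hx
  have key : ∀ r : ℝ, 0 < r → ∀ᶠ n : ℕ in Filter.atTop, 2 ≤ ((n : ℝ) + 1) * r := by
    intro r hr
    filter_upwards [(tendsto_natCast_atTop_atTop (R := ℝ)).eventually_ge_atTop (2 / r)] with n hn
    rw [div_le_iff₀ hr] at hn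
    linarith
  refine tendsto_const_nhds.congr' ?_
  filter_upwards [key _ (sub_pos.2 h3), key _ (sub_pos.2 h2)] with n h1 h2
  rw [graphCutoff, rampCutoff_eq_one h1, rampCutoff_eq_one h2, one_mul]

/-- Near the lower graph, where `H` does not point outward, the outward flux density of a
Lipschitz field is controlled by the height above the graph. -/
lemma fderiv_sub_lastL_le_height {M L : ℝ} {H : Esp (d+1) → Esp (d+1)} {U : Set (Esp (d+1))}
    (hUo : IsOpen U) (hUc : Convex ℝ U) (hDU : closure (graphDomain d ρ₁ ℓ ℓt) ⊆ U)
    (hH : ContDiffOn ℝ 1 H U) (hDH : ∀ x ∈ U, ‖fderiv ℝ H x‖ ≤ M)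
    (hℓtpos : ∀ x' : Esp d, ‖x'‖ < ρ₁ → 0 < ℓt x')
    (hHν₂ : ∀ x' : Esp d, ‖x'‖ < ρ₁ →
      ⟪H (graphMk d x' (ℓ x' - ℓt x')), nuDown d (fun z => ℓ z - ℓt z) x'⟫ ≤ 0)
    (hL : ∀ x' ∈ ball (0 : Esp d) ρ₁, ‖fderiv ℝ (fun z => ℓ z - ℓt z) x'‖ ≤ L)
    {x : Esp (d+1)} (hx : x ∈ graphDomain d ρ₁ ℓ ℓt) :
    fderiv ℝ (fun z => ℓ z - ℓt z) (initL d x) (initL d (H x)) - lastL d (H x) ≤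
      (L + 1) * M * (lastL d x - (ℓ (initL d x) - ℓt (initL d x))) := by
  obtain ⟨h1, h2, h3⟩ := mem_graphDomain.1 hx
  set x' := initL d x with hx'
  set b := graphMk d x' (ℓ x' - ℓt x') with hb
  have hbU : b ∈ U := hDU (graphMk_mem_closure_graphDomain h1 (hℓtpos _ h1) le_rfl
    (by linarith [hℓtpos _ h1]))
  have hxU : x ∈ U := hDU (subset_closure hx)
  have hlip : ‖H x - H b‖ ≤ M * ‖x - b‖ :=
    Convex.norm_image_sub_le_of_norm_fderiv_le (𝕜 := ℝ)
      (fun z hz => (hH.contDiffAt (hUo.mem_nhds hz)).differentiableAt one_ne_zero) hDH hUc hbU hxU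
  have hdist : ‖x - b‖ = lastL d x - (ℓ x' - ℓt x') := by
    rw [← dist_eq_norm]
    conv_lhs => rw [← graphMk_initL_lastL d x, hb, ← hx']
    rw [dist_graphMk_same, abs_of_pos (by linarith)]
  have hbase := fderiv_sub_lastL_nonpos_of_inner_nuDown d _ x' _ (hHν₂ x' h1)
  rw [← hb] at hbase
  set A := fderiv ℝ (fun z => ℓ z - ℓt z) x' with hA
  have e1 : A (initL d (H x)) = A (initL d (H b)) + A (initL d (H x - H b)) := by
    rw [← map_add, ← map_add]; congr 2; abel
  have e2 : lastL d (H x) = lastL d (H b) + lastL d (H x - H b) := by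
    rw [← map_add]; congr 1; abel
  have hAL : ‖A‖ ≤ L := hL x' (by simpa using h1)
  have e3 : A (initL d (H x - H b)) ≤ L * ‖H x - H b‖ := by
    refine (le_abs_self _).trans ((A.le_opNorm _).trans ?_)
    exact mul_le_mul hAL (norm_initL_apply_le d _) (norm_nonneg _) ((norm_nonneg _).trans hAL)
  have e4 : -lastL d (H x - H b) ≤ ‖H x - H b‖ :=
    (neg_le_abs _).trans (abs_lastL_apply_le d _)
  have hL0 : 0 ≤ L := (norm_nonneg _).trans hAL
  calc A (initL d (H x)) - lastL d (H x) ≤ (L + 1) * ‖H x - H b‖ := by rw [e1, e2]; linarith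
    _ ≤ (L + 1) * (M * ‖x - b‖) := mul_le_mul_of_nonneg_left hlip (by linarith)
    _ = _ := by rw [hdist]; ring

lemma integrableOn_trace_omegaW (hρ₁ : 0 < ρ₁) (hℓ : ContDiffOn ℝ 1 ℓ (closedBall 0 ρ₁))
    {c : Esp d → ℝ} (hc : ContinuousOn c (ball 0 ρ₁)) {A : ℝ}
    (hA : ∀ x' ∈ ball (0 : Esp d) ρ₁, |c x'| ≤ A) :
    IntegrableOn (fun x' => c x' * omegaW d ℓ x') (ball 0 ρ₁) := by
  obtain ⟨L, hL0, hL⟩ := exists_bound_fderiv_ball hρ₁ hℓ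
  refine integrableOn_of_continuousOn_of_bounded isOpen_ball isBounded_ball
    (hc.mul (continuousOn_omegaW hℓ)) (C := A * (1 + L)) fun x' hx' => ?_
  rw [abs_mul, abs_of_nonneg (omegaW_nonneg _ _ _)]
  exact mul_le_mul (hA x' hx') (omegaW_le (hL x' hx')) (omegaW_nonneg _ _ _)
    ((abs_nonneg _).trans (hA x' hx'))

lemma continuousOn_graph (hℓ : ContinuousOn ℓ (closedBall 0 ρ₁)) :
    ContinuousOn (fun x' => graphMk d x' (ℓ x')) (ball 0 ρ₁) :=
  (continuous_graphMk d).comp_continuousOn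
    (continuousOn_id.prodMk (hℓ.mono ball_subset_closedBall))

/-- The transport inequality tested with a fixed cutoff. -/
lemma setIntegral_graphCutoff_transport_le {M L N ε k : ℝ} {H : Esp (d+1) → Esp (d+1)}
    {U : Set (Esp (d+1))} {g Q : Esp (d+1) → ℝ}
    (hρ₁ : 0 < ρ₁) (hM : 0 ≤ M) (hk : 0 < k) (hε : 0 ≤ ε)
    (hℓ : ContDiffOn ℝ 1 ℓ (closedBall 0 ρ₁)) (hℓt : ContDiffOn ℝ 1 ℓt (closedBall 0 ρ₁))
    (hℓtpos : ∀ x' : Esp d, ‖x'‖ < ρ₁ → 0 < ℓt x')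
    (hℓt0 : ∀ x' : Esp d, ‖x'‖ = ρ₁ → ℓt x' = 0)
    (hUo : IsOpen U) (hUc : Convex ℝ U) (hDU : closure (graphDomain d ρ₁ ℓ ℓt) ⊆ U)
    (hH : ContDiffOn ℝ 1 H U) (hHM : ∀ x ∈ U, ‖H x‖ ≤ M) (hDH : ∀ x ∈ U, ‖fderiv ℝ H x‖ ≤ M)
    (hHν₂ : ∀ x' : Esp d, ‖x'‖ < ρ₁ →
      ⟪H (graphMk d x' (ℓ x' - ℓt x')), nuDown d (fun z => ℓ z - ℓt z) x'⟫ ≤ 0)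
    (hL0 : 0 ≤ L)
    (hL : ∀ x' ∈ ball (0 : Esp d) ρ₁, ‖fderiv ℝ (fun z => ℓ z - ℓt z) x'‖ ≤ L)
    (hg : ContinuousOn g (closure (graphDomain d ρ₁ ℓ ℓt)))
    (hg0 : ∀ x ∈ closure (graphDomain d ρ₁ ℓ ℓt), 0 ≤ g x)
    (hgN : ∀ x ∈ closure (graphDomain d ρ₁ ℓ ℓt), g x ≤ N)
    (hg1 : ContDiffOn ℝ 1 g (graphDomain d ρ₁ ℓ ℓt))
    (hQ : ContinuousOn Q (closure (graphDomain d ρ₁ ℓ ℓt)))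
    (hQg : ∀ x ∈ graphDomain d ρ₁ ℓ ℓt, Q x = fderiv ℝ g x (H x))
    (hosc : ∀ x ∈ graphDomain d ρ₁ ℓ ℓt, k * (ℓ (initL d x) - lastL d x) ≤ 2 →
      g x ≤ g (graphMk d (initL d x) (ℓ (initL d x))) + ε) :
    ∫ x in graphDomain d ρ₁ ℓ ℓt, graphCutoff d ℓ ℓt k x * Q x ≤
      M * (∫ x' in ball (0 : Esp d) ρ₁, g (graphMk d x' (ℓ x')) * omegaW d ℓ x') +
      (d + 1) * M * (∫ x in graphDomain d ρ₁ ℓ ℓt, g x) +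
      (ε * (M * ∫ x' in ball (0 : Esp d) ρ₁, omegaW d ℓ x') +
        (N * ((L + 1) * M * 2) * volume.real (ball (0 : Esp d) ρ₁)) * (1 / k)) := by
  set D := graphDomain d ρ₁ ℓ ℓt with hDdef
  have hDo : IsOpen D := isOpen_graphDomain hℓ.continuousOn hℓt.continuousOn
  have hDb : Bornology.IsBounded D := isBounded_graphDomain hℓ.continuousOn hℓt.continuousOn
  have hDc : IsCompact (closure D) := hDb.isCompact_closure
  have hDm : MeasurableSet D := hDo.measurableSet
  set θ := deriv (rampCutoff k) with hθ
  obtain ⟨Cθ, hCθ⟩ := exists_bound_deriv_rampCutoff hk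
  have htop : ∀ x' ∈ ball (0 : Esp d) ρ₁, graphMk d x' (ℓ x') ∈ closure D := fun x' hx' => by
    have h : ‖x'‖ < ρ₁ := by simpa using hx'
    exact graphMk_mem_closure_graphDomain h (hℓtpos _ h) (by linarith [hℓtpos _ h]) le_rfl
  have hball : ∀ x ∈ D, initL d x ∈ ball (0 : Esp d) ρ₁ := fun x hx => by
    simpa using (mem_graphDomain.1 hx).1
  have hN0 : ∀ x ∈ D, 0 ≤ N := fun x hx =>
    (hg0 x (subset_closure hx)).trans (hgN x (subset_closure hx))
  have c1 : ContinuousOn (fun x => ℓ (initL d x)) D := (contDiffOn_comp_initL hℓ).continuousOn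
  have c2 : ContinuousOn (fun x => ℓt (initL d x)) D := (contDiffOn_comp_initL hℓt).continuousOn
  have c3 : ContinuousOn (fun x => lastL d x) D := (lastL d).continuous.continuousOn
  have cθ := continuous_deriv_rampCutoff k
  have cq1 : ContinuousOn (fun x => θ (ℓ (initL d x) - lastL d x)) D :=
    cθ.comp_continuousOn (c1.sub c3)
  have cq2 : ContinuousOn (fun x => θ (lastL d x - (ℓ (initL d x) - ℓt (initL d x)))) D :=
    cθ.comp_continuousOn (c3.sub (c1.sub c2))
  have ctop : ContinuousOn (fun x' => g (graphMk d x' (ℓ x'))) (ball 0 ρ₁) :=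
    hg.comp (continuousOn_graph hℓ.continuousOn) htop
  have hωint : IntegrableOn (fun x' => omegaW d ℓ x') (ball 0 ρ₁) := by
    simpa using integrableOn_trace_omegaW hρ₁ hℓ (c := fun _ => 1) continuousOn_const
      (A := 1) (fun x' _ => by simp)
  have hgωint : IntegrableOn (fun x' => g (graphMk d x' (ℓ x')) * omegaW d ℓ x') (ball 0 ρ₁) :=
    integrableOn_trace_omegaW hρ₁ hℓ ctop (A := N) fun x' hx' => by
      rw [abs_of_nonneg (hg0 _ (htop x' hx'))]
      exact hgN _ (htop x' hx')
  let a : Esp d → ℝ := fun x' => M * (g (graphMk d x' (ℓ x')) * omegaW d ℓ x') +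
    ε * M * omegaW d ℓ x'
  have haint : IntegrableOn a (ball 0 ρ₁) := (hgωint.const_mul M).add (hωint.const_mul (ε * M))
  have ha0 : ∀ x' ∈ ball (0 : Esp d) ρ₁, 0 ≤ a x' := fun x' hx' => by
    have h1 := hg0 _ (htop x' hx')
    have h2 := omegaW_nonneg d ℓ x'
    positivity
  have hacont : ContinuousOn a (ball 0 ρ₁) :=
    ((ctop.mul (continuousOn_omegaW hℓ)).const_smul M).add
      ((continuousOn_omegaW hℓ).const_smul (ε * M))
  obtain ⟨L', hL'0, hL'⟩ := exists_bound_fderiv_ball hρ₁ hℓ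
  have haux : ∀ x' ∈ ball (0 : Esp d) ρ₁, |a x'| ≤ M * (N * (1 + L')) + ε * M * (1 + L') := by
    intro x' hx'
    rw [abs_of_nonneg (ha0 x' hx')]
    have h1 := hg0 _ (htop x' hx')
    have h2 := hgN _ (htop x' hx')
    have h3 := omegaW_nonneg d ℓ x'
    have h4 := omegaW_le (hL' x' hx')
    have h5 : 0 ≤ N := h1.trans h2
    simp only [a]
    gcongr
  have int1 : IntegrableOn (fun x => a (initL d x) * θ (ℓ (initL d x) - lastL d x)) D := by
    refine integrableOn_of_continuousOn_of_bounded hDo hDb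
      ((hacont.comp (initL d).continuous.continuousOn hball).mul cq1)
      (C := (M * (N * (1 + L')) + ε * M * (1 + L')) * Cθ) fun x hx => ?_
    rw [abs_mul]
    exact mul_le_mul (haux _ (hball x hx))
      (hCθ _ (by linarith [(mem_graphDomain.1 hx).2.2])) (abs_nonneg _)
      ((abs_nonneg _).trans (haux _ (hball x hx)))
  let c : ℝ := N * ((L + 1) * M * (2 / k))
  have int2 : IntegrableOn
      (fun x => c * θ (lastL d x - (ℓ (initL d x) - ℓt (initL d x)))) D := by
    refine Integrable.const_mul (integrableOn_of_continuousOn_of_bounded hDo hDb cq2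
      (C := Cθ) fun x hx => ?_) c
    exact hCθ _ (by linarith [(mem_graphDomain.1 hx).2.1])
  have gint : IntegrableOn g D := (hg.integrableOn_compact hDc).mono_set subset_closure
  have Qint : IntegrableOn Q D := (hQ.integrableOn_compact hDc).mono_set subset_closure
  have ηcont : ContinuousOn (graphCutoff d ℓ ℓt k) D := (contDiffOn_graphCutoff hℓ hℓt k).continuousOn
  have ηQint : IntegrableOn (fun x => graphCutoff d ℓ ℓt k x * Q x) D := by
    refine Integrable.bdd_mul (c := 1) Qint (ηcont.aestronglyMeasurable hDm) ?_
    filter_upwards with x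
    rw [Real.norm_of_nonneg (graphCutoff_nonneg k x)]
    exact graphCutoff_le_one k x
  obtain ⟨divint, divzero⟩ := setIntegral_divergence_cutoff hDo
    (isCompact_graphCore hℓ.continuousOn hℓt.continuousOn hℓt0 hk) (graphCore_subset hℓt0 hk)
    (hH.mono (subset_closure.trans hDU)) hg1 (contDiffOn_graphCutoff hℓ hℓt k)
    (fun x hx hxK => graphCutoff_eq_zero hx hxK)
  have lower : ∀ x ∈ D, graphCutoff d ℓ ℓt k x * Q x - (d + 1) * M * g x -
      a (initL d x) * θ (ℓ (initL d x) - lastL d x) -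
      c * θ (lastL d x - (ℓ (initL d x) - ℓt (initL d x))) ≤
      g x * fderiv ℝ (graphCutoff d ℓ ℓt k) x (H x) +
        graphCutoff d ℓ ℓt k x * (fderiv ℝ g x (H x) + g x * divergenceE H x) := by
    intro x hx
    have hxU : x ∈ U := hDU (subset_closure hx)
    obtain ⟨-, hlow, hup⟩ := mem_graphDomain.1 hx
    have hgx := hg0 x (subset_closure hx)
    rw [fderiv_graphCutoff hℓ hℓt k hx, ← hQg x hx]
    have hdiv := (abs_le.1 (abs_divergenceE_le (hDH x hxU))).1
    push_cast at hdiv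
    have η0 := graphCutoff_nonneg (ℓ := ℓ) (ℓt := ℓt) k x
    have η1 := graphCutoff_le_one (ℓ := ℓ) (ℓt := ℓt) k x
    set η := graphCutoff d ℓ ℓt k x
    set r1 := ℓ (initL d x) - lastL d x
    set r2 := lastL d x - (ℓ (initL d x) - ℓt (initL d x))
    have f1 : -((d + 1) * M * g x) ≤ η * (g x * divergenceE H x) := by
      have i1 : g x * (-((d + 1) * M)) ≤ g x * divergenceE H x :=
        mul_le_mul_of_nonneg_left hdiv hgx
      have i2 := mul_le_mul_of_nonneg_left i1 η0
      have i3 : η * (g x * ((d + 1) * M)) ≤ 1 * (g x * ((d + 1) * M)) :=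
        mul_le_mul_of_nonneg_right η1 (by positivity)
      linarith
    have θ1 : 0 ≤ θ r1 := deriv_rampCutoff_nonneg hk _
    have θ2 : 0 ≤ θ r2 := deriv_rampCutoff_nonneg hk _
    have f2 : g x * (rampCutoff k r2 * θ r1 *
        (lastL d (H x) - fderiv ℝ ℓ (initL d x) (initL d (H x)))) ≤ a (initL d x) * θ r1 := by
      rcases lt_or_ge 2 (k * r1) with h | h
      · simp [hθ, deriv_rampCutoff_eq_zero h]
      have j1 := lastL_sub_fderiv_le d ℓ (initL d x) (H x)
      have j2 := mul_le_mul_of_nonneg_right (hHM x hxU) (omegaW_nonneg d ℓ (initL d x))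
      have j3 := hosc x hx h
      have hω := omegaW_nonneg d ℓ (initL d x)
      have htp := hg0 _ (htop _ (hball x hx))
      calc _ ≤ g x * (rampCutoff k r2 * θ r1 * (M * omegaW d ℓ (initL d x))) := by
            have := rampCutoff_nonneg k r2
            gcongr
            exact j1.trans j2
        _ ≤ (g (graphMk d (initL d x) (ℓ (initL d x))) + ε) *
            (1 * θ r1 * (M * omegaW d ℓ (initL d x))) := by
            have := rampCutoff_nonneg k r2
            gcongr
            exact rampCutoff_le_one k r2
        _ = a (initL d x) * θ r1 := by simp only [a]; ring
    have f3 : g x * (rampCutoff k r1 * θ r2 *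
        (fderiv ℝ (fun z => ℓ z - ℓt z) (initL d x) (initL d (H x)) - lastL d (H x))) ≤
        c * θ r2 := by
      rcases lt_or_ge 2 (k * r2) with h | h
      · simp [hθ, deriv_rampCutoff_eq_zero h]
      have j1 := fderiv_sub_lastL_le_height hUo hUc hDU hH hDH hℓtpos hHν₂ hL hx
      have j2 : r2 ≤ 2 / k := by rw [le_div_iff₀ hk]; linarith
      have hr2 : 0 ≤ r2 := by simp only [r2]; linarith
      calc _ ≤ g x * (rampCutoff k r1 * θ r2 * ((L + 1) * M * (2 / k))) := by
            have := rampCutoff_nonneg k r1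
            gcongr
            refine j1.trans ?_
            gcongr
        _ ≤ N * (1 * θ r2 * ((L + 1) * M * (2 / k))) := by
            have h5 := hN0 x hx
            have := rampCutoff_nonneg k r1
            gcongr
            · exact hgN x (subset_closure hx)
            · exact rampCutoff_le_one k r1
        _ = c * θ r2 := by simp only [c]; ring
    simp only [hθ] at f2 f3 ⊢
    linarith
  have hmono := setIntegral_mono_on
    (((ηQint.sub (gint.const_mul ((d + 1) * M))).sub int1).sub int2) divint hDm lower
  rw [divzero, integral_sub' ((ηQint.sub (gint.const_mul _)).sub int1) int2,
    integral_sub' (ηQint.sub (gint.const_mul _)) int1, integral_sub' ηQint (gint.const_mul _),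
    integral_const_mul] at hmono
  have up : ∫ x in D, a (initL d x) * θ (ℓ (initL d x) - lastL d x) ≤
      ∫ x' in ball (0 : Esp d) ρ₁, a x' := by
    refine setIntegral_graphDomain_mul_le hDm haint ha0
      (q := fun x => θ (ℓ (initL d x) - lastL d x))
      (fun x => deriv_rampCutoff_nonneg hk _) int1 fun x' hx' => ?_
    simp only [initL_graphMk, lastL_graphMk]
    refine setIntegral_deriv_rampCutoff_sub_left_le _ _ _ _ ?_
    linarith [hℓtpos x' (by simpa using hx')]
  have down : ∫ x in D, c * θ (lastL d x - (ℓ (initL d x) - ℓt (initL d x))) ≤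
      ∫ _ in ball (0 : Esp d) ρ₁, c := by
    by_cases hc : 0 ≤ N
    · refine setIntegral_graphDomain_mul_le hDm (a := fun _ => c)
        (q := fun x => θ (lastL d x - (ℓ (initL d x) - ℓt (initL d x))))
        (integrableOn_const (by finiteness))
        (fun x' _ => by positivity) (fun x => deriv_rampCutoff_nonneg hk _) int2 fun x' hx' => ?_
      simp only [initL_graphMk, lastL_graphMk]
      refine setIntegral_deriv_rampCutoff_sub_right_le _ _ _ _ ?_
      linarith [hℓtpos x' (by simpa using hx')]
    · have h0 : (0 : Esp d) ∈ ball (0 : Esp d) ρ₁ := mem_ball_self hρ₁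
      exact absurd ((hg0 _ (htop 0 h0)).trans (hgN _ (htop 0 h0))) hc
  have ha_eq : ∫ x' in ball (0 : Esp d) ρ₁, a x' =
      M * (∫ x' in ball (0 : Esp d) ρ₁, g (graphMk d x' (ℓ x')) * omegaW d ℓ x') +
      ε * M * ∫ x' in ball (0 : Esp d) ρ₁, omegaW d ℓ x' := by
    simp only [a]
    rw [integral_add (hgωint.const_mul M) (hωint.const_mul (ε * M)), integral_const_mul,
      integral_const_mul]
  have hc_eq : ∫ _ in ball (0 : Esp d) ρ₁, c =
      (N * ((L + 1) * M * 2) * volume.real (ball (0 : Esp d) ρ₁)) * (1 / k) := by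
    rw [setIntegral_const, smul_eq_mul]
    simp only [c]
    ring
  rw [ha_eq] at up
  rw [hc_eq] at down
  linarith

end Transport

section TransportLimit

open Filter

variable {d : ℕ} {ρ₁ : ℝ} {ℓ ℓt : Esp d → ℝ}

/-- The transport inequality: integrating `⟨H, ∇g⟩` over the graph domain costs only the trace of
`g` on the upper graph, because `H` does not point outward on the lower graph. -/
lemma setIntegral_transport_le {M : ℝ} {H : Esp (d+1) → Esp (d+1)}
    {U : Set (Esp (d+1))} {g Q : Esp (d+1) → ℝ}
    (hρ₁ : 0 < ρ₁) (hM : 0 ≤ M)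
    (hℓ : ContDiffOn ℝ 1 ℓ (closedBall 0 ρ₁)) (hℓt : ContDiffOn ℝ 1 ℓt (closedBall 0 ρ₁))
    (hℓtpos : ∀ x' : Esp d, ‖x'‖ < ρ₁ → 0 < ℓt x')
    (hℓt0 : ∀ x' : Esp d, ‖x'‖ = ρ₁ → ℓt x' = 0)
    (hUo : IsOpen U) (hUc : Convex ℝ U) (hDU : closure (graphDomain d ρ₁ ℓ ℓt) ⊆ U)
    (hH : ContDiffOn ℝ 1 H U) (hHM : ∀ x ∈ U, ‖H x‖ ≤ M) (hDH : ∀ x ∈ U, ‖fderiv ℝ H x‖ ≤ M)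
    (hHν₂ : ∀ x' : Esp d, ‖x'‖ < ρ₁ →
      ⟪H (graphMk d x' (ℓ x' - ℓt x')), nuDown d (fun z => ℓ z - ℓt z) x'⟫ ≤ 0)
    (hg : ContinuousOn g (closure (graphDomain d ρ₁ ℓ ℓt)))
    (hg0 : ∀ x ∈ closure (graphDomain d ρ₁ ℓ ℓt), 0 ≤ g x)
    (hg1 : ContDiffOn ℝ 1 g (graphDomain d ρ₁ ℓ ℓt))
    (hQ : ContinuousOn Q (closure (graphDomain d ρ₁ ℓ ℓt)))
    (hQg : ∀ x ∈ graphDomain d ρ₁ ℓ ℓt, Q x = fderiv ℝ g x (H x)) :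
    ∫ x in graphDomain d ρ₁ ℓ ℓt, Q x ≤
      M * (∫ x' in ball (0 : Esp d) ρ₁, g (graphMk d x' (ℓ x')) * omegaW d ℓ x') +
      (d + 1) * M * (∫ x in graphDomain d ρ₁ ℓ ℓt, g x) := by
  set D := graphDomain d ρ₁ ℓ ℓt with hDdef
  have hDo : IsOpen D := isOpen_graphDomain hℓ.continuousOn hℓt.continuousOn
  have hDb : Bornology.IsBounded D := isBounded_graphDomain hℓ.continuousOn hℓt.continuousOn
  have hDc : IsCompact (closure D) := hDb.isCompact_closure
  have hDm : MeasurableSet D := hDo.measurableSet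
  obtain ⟨N, hN⟩ := hDc.exists_bound_of_continuousOn hg
  obtain ⟨L, hL0, hL⟩ := exists_bound_fderiv_ball hρ₁ (hℓ.sub hℓt)
  have Qint : IntegrableOn Q D := (hQ.integrableOn_compact hDc).mono_set subset_closure
  have lhs : Tendsto (fun n : ℕ => ∫ x in D, graphCutoff d ℓ ℓt (n + 1 : ℝ) x * Q x) atTop
      (nhds (∫ x in D, Q x)) := by
    refine tendsto_integral_of_dominated_convergence (fun x => |Q x|) (fun n => ?_) Qint.abs
      (fun n => ?_) ?_
    · exact (((contDiffOn_graphCutoff hℓ hℓt _).continuousOn).mul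
        (hQ.mono subset_closure)).aestronglyMeasurable hDm
    · filter_upwards with x
      rw [Real.norm_eq_abs, abs_mul, abs_of_nonneg (graphCutoff_nonneg _ x)]
      exact mul_le_of_le_one_left (abs_nonneg _) (graphCutoff_le_one _ x)
    · filter_upwards [ae_restrict_mem hDm] with x hx
      simpa using (tendsto_graphCutoff hx).mul_const (Q x)
  set W := M * ∫ x' in ball (0 : Esp d) ρ₁, omegaW d ℓ x' with hW
  have hW0 : 0 ≤ W := mul_nonneg hM (integral_nonneg fun x' => omegaW_nonneg d ℓ x')
  refine le_of_forall_pos_le_add fun e he => ?_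
  set ε := e / (W + 1) with hε
  have hε0 : 0 < ε := by positivity
  obtain ⟨δ, hδ, hgδ⟩ := Metric.uniformContinuousOn_iff.1
    (hDc.uniformContinuousOn_of_continuous hg) ε hε0
  have rhs := ((tendsto_one_div_add_atTop_nhds_zero_nat (𝕜 := ℝ)).const_mul
    (N * ((L + 1) * M * 2) * volume.real (ball (0 : Esp d) ρ₁))).const_add (ε * W) |>.const_add
      (M * (∫ x' in ball (0 : Esp d) ρ₁, g (graphMk d x' (ℓ x')) * omegaW d ℓ x') +
        (d + 1) * M * (∫ x in D, g x))
  have hev : ∀ᶠ n : ℕ in atTop, 1 / ((n : ℝ) + 1) < δ / 2 :=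
    (tendsto_one_div_add_atTop_nhds_zero_nat (𝕜 := ℝ)).eventually (gt_mem_nhds (by positivity))
  have key := le_of_tendsto_of_tendsto lhs rhs (by
    filter_upwards [hev] with n hn
    refine setIntegral_graphCutoff_transport_le hρ₁ hM (by positivity) hε0.le hℓ hℓt hℓtpos hℓt0
      hUo hUc hDU hH hHM hDH hHν₂ hL0 hL hg hg0 (fun x hx => (le_abs_self _).trans (hN x hx))
      hg1 hQ hQg fun x hx hxk => ?_
    obtain ⟨h1, h2, h3⟩ := mem_graphDomain.1 hx
    have hclose : dist x (graphMk d (initL d x) (ℓ (initL d x))) < δ := by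
      conv_lhs => rw [← graphMk_initL_lastL d x]
      rw [initL_graphMk, dist_graphMk_same, abs_sub_comm, abs_of_pos (by linarith)]
      have hn' : (0 : ℝ) < n + 1 := by positivity
      rw [div_lt_iff₀ hn'] at hn
      by_contra! h
      nlinarith
    have := hgδ x (subset_closure hx) _
      (graphMk_mem_closure_graphDomain h1 (hℓtpos _ h1) (by linarith) le_rfl) hclose
    rw [Real.dist_eq] at this
    linarith [le_abs_self (g x - g (graphMk d (initL d x) (ℓ (initL d x))))])
  have hεW : ε * W ≤ e := by
    rw [hε, div_mul_eq_mul_div, div_le_iff₀ (by positivity)]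
    nlinarith
  linarith

end TransportLimit

section TimeDerivative

/-- The time derivative on `[0, T]`, one-sided at the end points. -/
def timeDeriv {α : Type*} (T : ℝ) (y : α → ℝ → ℝ) (x : α) (t : ℝ) : ℝ := derivWithin (y x) (Icc 0 T) t

lemma timeDeriv_eq_deriv {α : Type*} {y : α → ℝ → ℝ} {x : α} {t : ℝ} {T : ℝ} (ht : t ∈ Ioo 0 T) :
    timeDeriv T y x t = deriv (y x) t :=
  derivWithin_of_mem_nhds (Icc_mem_nhds ht.1 ht.2)

variable {E : Type*} [NormedAddCommGroup E] [NormedSpace ℝ E] {T : ℝ} {S : Set E} {y : E → ℝ → ℝ}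

lemma hasDerivWithinAt_slice {G : E × ℝ →L[ℝ] ℝ} {x : E} {t : ℝ} (hx : x ∈ S)
    (hG : HasFDerivWithinAt (fun q : E × ℝ => y q.1 q.2) G (S ×ˢ Icc 0 T) (x, t)) :
    HasDerivWithinAt (y x) (G (0, 1)) (Icc 0 T) t := by
  have h2 : HasDerivWithinAt (fun τ : ℝ => (x, τ)) ((0 : E), (1 : ℝ)) (Icc 0 T) t :=
    (hasDerivWithinAt_const t _ x).prodMk (hasDerivWithinAt_id t _)
  exact hG.comp_hasDerivWithinAt (f := fun τ : ℝ => (x, τ)) t h2 fun τ hτ => ⟨hx, hτ⟩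

lemma hasFDerivWithinAt_slice {G : E × ℝ →L[ℝ] ℝ} {x : E} {t : ℝ} (ht : t ∈ Icc 0 T)
    (hG : HasFDerivWithinAt (fun q : E × ℝ => y q.1 q.2) G (S ×ˢ Icc 0 T) (x, t)) :
    HasFDerivWithinAt (fun z => y z t) (G.comp (ContinuousLinearMap.inl ℝ E ℝ)) S x := by
  have h2 : HasFDerivWithinAt (fun z : E => (z, t)) (ContinuousLinearMap.inl ℝ E ℝ) S x :=
    (hasFDerivWithinAt_id x S).prodMk (hasFDerivWithinAt_const t x S)
  have hmaps : MapsTo (fun z : E => (z, t)) S (S ×ˢ Icc 0 T) := fun z hz => ⟨hz, ht⟩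
  exact HasFDerivWithinAt.comp (f := fun z : E => (z, t)) x hG h2 hmaps

lemma timeDeriv_eq_of_hasFDerivWithinAt (hT : 0 < T) {G : E × ℝ →L[ℝ] ℝ} {q : E × ℝ}
    (hq : q ∈ S ×ˢ Icc 0 T)
    (hG : HasFDerivWithinAt (fun q : E × ℝ => y q.1 q.2) G (S ×ˢ Icc 0 T) q) :
    timeDeriv T y q.1 q.2 = G (0, 1) :=
  (hasDerivWithinAt_slice hq.1 hG).derivWithin (uniqueDiffOn_Icc hT _ hq.2)

lemma contDiffOn_timeDeriv (hT : 0 < T) {n : ℕ}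
    (hy : ContDiffOn ℝ (n + 1) (fun q : E × ℝ => y q.1 q.2) (S ×ˢ Icc 0 T)) :
    ContDiffOn ℝ n (fun q : E × ℝ => timeDeriv T y q.1 q.2) (S ×ˢ Icc 0 T) := by
  intro q hq
  obtain ⟨u, hu, hus, -, f', hf', hf'c⟩ :=
    (contDiffWithinAt_succ_iff_hasFDerivWithinAt' (by simp)).1 (hy q hq)
  rw [insert_eq_of_mem hq] at hu hus
  refine (hf'c.clm_apply (contDiffWithinAt_const (c := ((0 : E), (1 : ℝ))))).congr_of_eventuallyEq
    ?_ ?_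
  · filter_upwards [hu] with p hp
    exact timeDeriv_eq_of_hasFDerivWithinAt hT (hus hp) (hf' p hp)
  · exact timeDeriv_eq_of_hasFDerivWithinAt hT hq (hf' q (mem_of_mem_nhdsWithin hq hu))

/-- The time derivative of a solution solves the equation with time-differentiated source. -/
lemma timeDeriv_transport {D : Set E} (hD : IsOpen D) {H : E → E} {p₁ f : E → ℝ} {R : E → ℝ → ℝ}
    (hy : ContDiffOn ℝ 2 (fun q : E × ℝ => y q.1 q.2) (D ×ˢ Icc 0 T))
    (hR : ContDiffOn ℝ 2 (fun q : E × ℝ => R q.1 q.2) (D ×ˢ Icc 0 T))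
    (hpde : ∀ x ∈ D, ∀ t ∈ Ioo 0 T,
      deriv (y x) t + fderiv ℝ (fun z => y z t) x (H x) + p₁ x * y x t = R x t * f x)
    {x : E} (hx : x ∈ D) {t : ℝ} (ht : t ∈ Ioo 0 T) :
    timeDeriv T (timeDeriv T y) x t + fderiv ℝ (fun z => timeDeriv T y z t) x (H x) +
      p₁ x * timeDeriv T y x t = timeDeriv T R x t * f x := by
  set Y : E × ℝ → ℝ := fun q => y q.1 q.2 with hY
  set F := fderiv ℝ Y with hF
  have hO : ∀ q ∈ D ×ˢ Ioo 0 T, D ×ˢ Icc 0 T ∈ nhds q := fun q hq =>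
    prod_mem_nhds (hD.mem_nhds hq.1) (Icc_mem_nhds hq.2.1 hq.2.2)
  have hYF : ∀ q ∈ D ×ˢ Ioo 0 T, HasFDerivAt Y (F q) q := fun q hq =>
    ((hy.contDiffAt (hO q hq)).differentiableAt two_ne_zero).hasFDerivAt
  have htd : ∀ x' ∈ D, ∀ τ ∈ Ioo 0 T, HasDerivAt (y x') (F (x', τ) (0, 1)) τ :=
    fun x' hx' τ hτ => (hasDerivWithinAt_slice hx' (hYF (x', τ) ⟨hx', hτ⟩).hasFDerivWithinAt).hasDerivAt
      (Icc_mem_nhds hτ.1 hτ.2)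
  have hsd : ∀ x' ∈ D, ∀ τ ∈ Ioo 0 T, HasFDerivAt (fun z => y z τ)
      ((F (x', τ)).comp (ContinuousLinearMap.inl ℝ E ℝ)) x' :=
    fun x' hx' τ hτ => (hasFDerivWithinAt_slice (Ioo_subset_Icc_self hτ)
      (hYF (x', τ) ⟨hx', hτ⟩).hasFDerivWithinAt).hasFDerivAt (hD.mem_nhds hx')
  have hq : (x, t) ∈ D ×ˢ Ioo 0 T := ⟨hx, ht⟩
  have hYq : ContDiffAt ℝ 2 Y (x, t) := hy.contDiffAt (hO _ hq)
  have hsymm := hYq.isSymmSndFDerivAt (by simp)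
  have hF' : HasFDerivAt F (fderiv ℝ F (x, t)) (x, t) :=
    ((hYq.fderiv_right (m := 1) (by norm_num)).differentiableAt one_ne_zero).hasFDerivAt
  have ct : HasDerivAt (fun τ : ℝ => (x, τ)) ((0 : E), (1 : ℝ)) t :=
    (hasDerivAt_const t x).prodMk (hasDerivAt_id t)
  have cs : HasFDerivAt (fun z : E => (z, t)) (ContinuousLinearMap.inl ℝ E ℝ) x :=
    (hasFDerivAt_id x).prodMk (hasFDerivAt_const t x)
  have hFt : ∀ v, HasDerivAt (fun τ => F (x, τ) v) (fderiv ℝ F (x, t) (0, 1) v) t := fun v =>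
    (ContinuousLinearMap.apply ℝ ℝ v).hasFDerivAt.comp_hasDerivAt t (hF'.comp_hasDerivAt t ct)
  have hFs : HasFDerivAt (fun z => F (z, t) (0, 1))
      ((ContinuousLinearMap.apply ℝ ℝ ((0 : E), (1 : ℝ))).comp
        ((fderiv ℝ F (x, t)).comp (ContinuousLinearMap.inl ℝ E ℝ))) x :=
    (ContinuousLinearMap.apply ℝ ℝ ((0 : E), (1 : ℝ))).hasFDerivAt.comp x
      (HasFDerivAt.comp (f := fun z : E => (z, t)) x hF' cs)
  have evt : ∀ᶠ τ in nhds t, τ ∈ Ioo 0 T := isOpen_Ioo.mem_nhds ht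
  have evx : ∀ᶠ z in nhds x, z ∈ D := hD.mem_nhds hx
  have e1 : timeDeriv T (timeDeriv T y) x t = fderiv ℝ F (x, t) (0, 1) (0, 1) := by
    rw [timeDeriv_eq_deriv ht]
    refine ((hFt (0, 1)).congr_of_eventuallyEq ?_).deriv
    filter_upwards [evt] with τ hτ
    rw [timeDeriv_eq_deriv hτ, (htd x hx τ hτ).deriv]
  have e2 : fderiv ℝ (fun z => timeDeriv T y z t) x (H x) =
      fderiv ℝ F (x, t) (0, 1) (H x, 0) := by
    rw [(hFs.congr_of_eventuallyEq (f₁ := fun z => timeDeriv T y z t) ?_).fderiv]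
    · simpa using hsymm (H x, 0) (0, 1)
    · filter_upwards [evx] with z hz
      rw [timeDeriv_eq_deriv ht, (htd z hz t ht).deriv]
  have e3 : HasDerivAt (fun τ => F (x, τ) (0, 1) + F (x, τ) (H x, 0) + p₁ x * y x τ)
      (fderiv ℝ F (x, t) (0, 1) (0, 1) + fderiv ℝ F (x, t) (0, 1) (H x, 0) +
        p₁ x * F (x, t) (0, 1)) t :=
    ((hFt _).add (hFt _)).add ((htd x hx t ht).const_mul _)
  have hRt : HasDerivAt (R x) (timeDeriv T R x t) t := by
    have h := ((hR.contDiffAt (hO _ hq)).differentiableAt two_ne_zero).hasFDerivAt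
    rw [timeDeriv_eq_deriv ht]
    exact ((hasDerivWithinAt_slice hx h.hasFDerivWithinAt).hasDerivAt
      (Icc_mem_nhds ht.1 ht.2)).differentiableAt.hasDerivAt
  have e4 := (hRt.mul_const (f x)).congr_of_eventuallyEq
    (f₁ := fun τ => F (x, τ) (0, 1) + F (x, τ) (H x, 0) + p₁ x * y x τ) (by
      filter_upwards [evt] with τ hτ
      rw [← hpde x hx τ hτ, (htd x hx τ hτ).deriv, (hsd x hx τ hτ).fderiv]
      simp)
  rw [e1, e2, timeDeriv_eq_deriv ht, (htd x hx t ht).deriv]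
  exact e3.unique e4

/-- At the initial time, a solution starting from zero has the source as its time derivative. -/
lemma timeDeriv_zero {D : Set E} (hT : 0 < T) (hD : IsOpen D) {H : E → E} {p₁ f : E → ℝ}
    {R : E → ℝ → ℝ}
    (hy : ContDiffOn ℝ 2 (fun q : E × ℝ => y q.1 q.2) (D ×ˢ Icc 0 T))
    (hR : ContinuousOn (fun q : E × ℝ => R q.1 q.2) (D ×ˢ Icc 0 T))
    (hpde : ∀ x ∈ D, ∀ t ∈ Ioo 0 T,
      deriv (y x) t + fderiv ℝ (fun z => y z t) x (H x) + p₁ x * y x t = R x t * f x)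
    (hy0 : ∀ x ∈ D, y x 0 = 0) {x : E} (hx : x ∈ D) :
    timeDeriv T y x 0 = R x 0 * f x := by
  have hud : UniqueDiffOn ℝ (D ×ˢ Icc 0 T) := hD.uniqueDiffOn.prod (uniqueDiffOn_Icc hT)
  set Y : E × ℝ → ℝ := fun q => y q.1 q.2 with hY
  set G := fderivWithin ℝ Y (D ×ˢ Icc 0 T) with hG
  have hGc : ContinuousOn G (D ×ˢ Icc 0 T) := hy.continuousOn_fderivWithin hud (by norm_num)
  have hYG : ∀ q ∈ D ×ˢ Icc 0 T, HasFDerivWithinAt Y (G q) (D ×ˢ Icc 0 T) q := fun q hq =>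
    (hy.differentiableOn two_ne_zero q hq).hasFDerivWithinAt
  have hslice : ContinuousOn (fun τ : ℝ => (x, τ)) (Icc 0 T) := by fun_prop
  have hmaps : MapsTo (fun τ : ℝ => (x, τ)) (Icc 0 T) (D ×ˢ Icc 0 T) := fun τ hτ => ⟨hx, hτ⟩
  have cG := hGc.comp hslice hmaps
  have cl : ContinuousOn (fun τ => G (x, τ) (0, 1) + G (x, τ) (H x, 0) + p₁ x * Y (x, τ))
      (Icc 0 T) :=
    ((cG.clm_apply continuousOn_const).add (cG.clm_apply continuousOn_const)).add
      (continuousOn_const.mul (hy.continuousOn.comp hslice hmaps))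
  have cr : ContinuousOn (fun τ => R x τ * f x) (Icc 0 T) :=
    (hR.comp hslice hmaps).mul continuousOn_const
  have heq : EqOn (fun τ => G (x, τ) (0, 1) + G (x, τ) (H x, 0) + p₁ x * Y (x, τ))
      (fun τ => R x τ * f x) (Ioo 0 T) := fun τ hτ => by
    have hτ' := Ioo_subset_Icc_self hτ
    have h1 := timeDeriv_eq_of_hasFDerivWithinAt hT ⟨hx, hτ'⟩ (hYG (x, τ) ⟨hx, hτ'⟩)
    have h2 := ((hasFDerivWithinAt_slice hτ' (hYG (x, τ) ⟨hx, hτ'⟩)).hasFDerivAt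
      (hD.mem_nhds hx)).fderiv
    have h3 := hpde x hx τ hτ
    rw [timeDeriv_eq_deriv hτ] at h1
    rw [h1, h2] at h3
    simpa using h3
  have h0 : (0 : ℝ) ∈ Icc 0 T := ⟨le_rfl, hT.le⟩
  have hz := heq.of_subset_closure cl cr Ioo_subset_Icc_self
    (closure_Ioo hT.ne).ge h0
  have h2 := ((hasFDerivWithinAt_slice h0 (hYG (x, 0) ⟨hx, h0⟩)).hasFDerivAt
      (hD.mem_nhds hx))
  have h3 : HasFDerivAt (fun z => y z 0) (0 : E →L[ℝ] ℝ) x := by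
    refine (hasFDerivAt_const (0 : ℝ) x).congr_of_eventuallyEq ?_
    filter_upwards [hD.mem_nhds hx] with z hz using hy0 z hz
  have h4 : G (x, 0) (H x, 0) = 0 := by
    simpa using congrArg (fun A : E →L[ℝ] ℝ => A (H x)) (h2.unique h3)
  rw [timeDeriv_eq_of_hasFDerivWithinAt hT (q := (x, 0)) ⟨hx, h0⟩ (hYG (x, 0) ⟨hx, h0⟩)]
  simpa [h4, hY, hy0 x hx] using hz

end TimeDerivative

section Cylinder

variable {m : ℕ} {T : ℝ} {D K : Set (Esp m)} {F : Esp m → ℝ → ℝ}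

lemma continuousOn_space_slice (hF : ContinuousOn (fun q : Esp m × ℝ => F q.1 q.2) (K ×ˢ Icc 0 T))
    {t : ℝ} (ht : t ∈ Icc 0 T) : ContinuousOn (fun x => F x t) K :=
  hF.comp (f := fun x => (x, t)) (by fun_prop) fun _ hx => ⟨hx, ht⟩

lemma continuousOn_time_slice (hF : ContinuousOn (fun q : Esp m × ℝ => F q.1 q.2) (K ×ˢ Icc 0 T))
    {x : Esp m} (hx : x ∈ K) : ContinuousOn (F x) (Icc 0 T) :=
  hF.comp (f := fun t => (x, t)) (by fun_prop) fun _ ht => ⟨hx, ht⟩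

lemma integrableOn_space_slice (hK : IsCompact K) (hDK : D ⊆ K)
    (hF : ContinuousOn (fun q : Esp m × ℝ => F q.1 q.2) (K ×ˢ Icc 0 T))
    {t : ℝ} (ht : t ∈ Icc 0 T) : IntegrableOn (fun x => F x t) D :=
  ((continuousOn_space_slice hF ht).integrableOn_compact hK).mono_set hDK

lemma integrable_cylinder (hK : IsCompact K) (hDK : D ⊆ K)
    (hF : ContinuousOn (fun q : Esp m × ℝ => F q.1 q.2) (K ×ˢ Icc 0 T)) :
    Integrable (fun q : Esp m × ℝ => F q.1 q.2)
      ((volume.restrict D).prod (volume.restrict (Ioo 0 T))) := by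
  rw [Measure.prod_restrict]
  exact (hF.integrableOn_compact (hK.prod isCompact_Icc)).mono_set
    (prod_mono hDK Ioo_subset_Icc_self)

lemma integrableOn_integral_space (hK : IsCompact K) (hDK : D ⊆ K)
    (hF : ContinuousOn (fun q : Esp m × ℝ => F q.1 q.2) (K ×ˢ Icc 0 T)) :
    IntegrableOn (fun t => ∫ x in D, F x t) (Ioo 0 T) :=
  (integrable_cylinder hK hDK hF).integral_prod_right

lemma setIntegral_swap_cylinder (hK : IsCompact K) (hDK : D ⊆ K)
    (hF : ContinuousOn (fun q : Esp m × ℝ => F q.1 q.2) (K ×ˢ Icc 0 T)) :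
    ∫ x in D, ∫ t in Ioo 0 T, F x t = ∫ t in Ioo 0 T, ∫ x in D, F x t :=
  integral_integral_swap (integrable_cylinder hK hDK hF)

/-- The trace of a continuous function against an integrable density is integrable in time. -/
lemma integrableOn_integral_trace {k : ℕ} {B : Set (Esp k)} {G : Esp k → Esp m} {ω : Esp k → ℝ}
    (hK : IsCompact K) (hB : MeasurableSet B) (hG : ContinuousOn G B) (hGK : MapsTo G B K)
    (hω : IntegrableOn ω B)
    (hF : ContinuousOn (fun q : Esp m × ℝ => F q.1 q.2) (K ×ˢ Icc 0 T)) :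
    IntegrableOn (fun t => ∫ x' in B, F (G x') t * ω x') (Ioo 0 T) := by
  obtain ⟨C, hC⟩ := (hK.prod isCompact_Icc).exists_bound_of_continuousOn hF
  have hωp : Integrable (fun q : Esp k × ℝ => ω q.1)
      ((volume.restrict B).prod (volume.restrict (Ioo 0 T))) := Integrable.comp_fst hω _
  have hmeas : AEStronglyMeasurable (fun q : Esp k × ℝ => F (G q.1) q.2)
      ((volume.restrict B).prod (volume.restrict (Ioo 0 T))) := by
    rw [Measure.prod_restrict]
    refine ContinuousOn.aestronglyMeasurable ?_ (hB.prod measurableSet_Ioo)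
    refine hF.comp (f := fun q : Esp k × ℝ => (G q.1, q.2)) ?_
      fun q hq => ⟨hGK hq.1, Ioo_subset_Icc_self hq.2⟩
    exact (hG.comp continuousOn_fst fun q hq => hq.1).prodMk continuousOn_snd
  refine Integrable.integral_prod_right (f := fun q : Esp k × ℝ => F (G q.1) q.2 * ω q.1)
    (hωp.bdd_mul (c := C) hmeas ?_)
  rw [Measure.prod_restrict]
  filter_upwards [ae_restrict_mem (hB.prod measurableSet_Ioo)] with q hq
  exact hC (G q.1, q.2) ⟨hGK hq.1, Ioo_subset_Icc_self hq.2⟩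

end Cylinder

lemma mul_eq_setIntegral_sub_mul_deriv {T : ℝ} (hT : 0 < T) {z z' : ℝ → ℝ}
    (hz : ∀ t ∈ Icc 0 T, HasDerivWithinAt z (z' t) (Icc 0 T) t) (hz' : ContinuousOn z' (Icc 0 T)) :
    T * z 0 = ∫ t in Ioo 0 T, (z t - (T - t) * z' t) := by
  have hzc : ContinuousOn z (Icc 0 T) := fun t ht => (hz t ht).continuousWithinAt
  have hc : ContinuousOn (fun t => z t - (T - t) * z' t) (Icc 0 T) := by fun_prop
  have hd : ∀ t ∈ Ioo 0 T, HasDerivAt (fun t => -((T - t) * z t)) (z t - (T - t) * z' t) t := by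
    intro t ht
    have h1 := (hz t (Ioo_subset_Icc_self ht)).hasDerivAt (Icc_mem_nhds ht.1 ht.2)
    refine ((((hasDerivAt_id t).const_sub T).mul h1).neg).congr_deriv ?_
    simp
    ring
  rw [← integral_Ioc_eq_integral_Ioo, ← intervalIntegral.integral_of_le hT.le,
    intervalIntegral.integral_eq_sub_of_hasDerivAt_of_le hT.le (by fun_prop) hd
      (hc.intervalIntegrable_of_Icc hT.le)]
  ring

/-- The weighted energy inequality at a fixed time: `tr` stands for the boundary trace. -/
lemma setIntegral_weighted_slice_le {m : ℕ} {D : Set (Esp m)} (hDo : IsOpen D)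
    (hK : IsCompact (closure D)) {H : Esp m → Esp m} {tr : (Esp m → ℝ) → ℝ} {M N : ℝ}
    (htr : ∀ g Q : Esp m → ℝ, ContinuousOn g (closure D) → (∀ x ∈ closure D, 0 ≤ g x) →
      ContDiffOn ℝ 1 g D → ContinuousOn Q (closure D) → (∀ x ∈ D, Q x = fderiv ℝ g x (H x)) →
      ∫ x in D, Q x ≤ M * tr g + N * ∫ x in D, g x)
    {v v' ψ h p r u₀ : Esp m → ℝ} {s β c C₂ l : ℝ} (hs : 0 ≤ s)
    (hv : ContinuousOn v (closure D)) (hv1 : ContDiffOn ℝ 1 v D) (hv' : ContinuousOn v' (closure D))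
    (hψ : ContinuousOn ψ (closure D)) (hψ1 : ContDiffOn ℝ 1 ψ D)
    (hh : ContinuousOn h (closure D)) (hψh : ∀ x ∈ D, fderiv ℝ ψ x (H x) = h x)
    (hhc : ∀ x ∈ D, c + β ≤ h x) (hp : ContinuousOn p (closure D)) (hpM : ∀ x ∈ D, |p x| ≤ M)
    (hr : ContinuousOn r (closure D)) (hu₀ : ContinuousOn u₀ (closure D))
    (hru : ∀ x ∈ D, r x ^ 2 ≤ C₂ * u₀ x ^ 2)
    (hpde : ∀ x ∈ D, v' x + fderiv ℝ v x (H x) + p x * v x = r x) :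
    ∫ x in D, -(2 * v x * v' x * Real.exp (2 * s * ψ x - l) -
        2 * s * β * (v x ^ 2 * Real.exp (2 * s * ψ x - l))) ≤
      M * tr (fun x => v x ^ 2 * Real.exp (2 * s * ψ x - l)) +
      (N + 2 * M + 1 - 2 * s * c) * (∫ x in D, v x ^ 2 * Real.exp (2 * s * ψ x - l)) +
      C₂ * ∫ x in D, u₀ x ^ 2 * Real.exp (2 * s * ψ x - l) := by
  have intg : ∀ {k : Esp m → ℝ}, ContinuousOn k (closure D) → IntegrableOn k D := fun hk =>
    (hk.integrableOn_compact hK).mono_set subset_closure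
  set w : Esp m → ℝ := fun x => Real.exp (2 * s * ψ x - l) with hw
  have hwc : ContinuousOn w (closure D) :=
    Real.continuous_exp.comp_continuousOn ((continuousOn_const.mul hψ).sub continuousOn_const)
  have hw1 : ContDiffOn ℝ 1 w D := ((contDiffOn_const.mul hψ1).sub contDiffOn_const).exp
  let Q : Esp m → ℝ := fun x => -(2 * v x * v' x * w x - 2 * s * β * (v x ^ 2 * w x)) +
    2 * s * (h x - β) * (v x ^ 2 * w x) + 2 * v x * w x * (-(p x) * v x + r x)
  have hQc : ContinuousOn Q (closure D) := by simp only [Q]; fun_prop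
  have hgc : ContinuousOn (fun x => v x ^ 2 * w x) (closure D) := by fun_prop
  have hu₀c : ContinuousOn (fun x => u₀ x ^ 2 * w x) (closure D) := by fun_prop
  have hlc : ContinuousOn (fun x => -(2 * v x * v' x * w x - 2 * s * β * (v x ^ 2 * w x)))
    (closure D) := by fun_prop
  have key := htr (fun x => v x ^ 2 * w x) Q hgc (fun x _ => by positivity)
    ((hv1.pow 2).mul hw1) hQc fun x hx => by
      have dv := ((hv1.contDiffAt (hDo.mem_nhds hx)).differentiableAt one_ne_zero).hasFDerivAt
      have dψ := ((hψ1.contDiffAt (hDo.mem_nhds hx)).differentiableAt one_ne_zero).hasFDerivAt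
      have dg := (dv.pow 2).mul (((dψ.const_mul (2 * s)).sub_const l).exp)
      rw [(show HasFDerivAt (fun x => v x ^ 2 * w x) _ x from dg).fderiv]
      simp only [Q, add_apply, smul_apply, smul_eq_mul, hψh x hx]
      rw [show fderiv ℝ v x (H x) = r x - v' x - p x * v x by linarith [hpde x hx]]
      simp [hw]
      ring
  have hpt : ∀ x ∈ D, -(2 * v x * v' x * w x - 2 * s * β * (v x ^ 2 * w x)) ≤
      Q x + (2 * M + 1 - 2 * s * c) * (v x ^ 2 * w x) + C₂ * (u₀ x ^ 2 * w x) := by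
    intro x hx
    have hwx : 0 < w x := Real.exp_pos _
    have a1 : 2 * s * c * (v x ^ 2 * w x) ≤ 2 * s * (h x - β) * (v x ^ 2 * w x) := by
      gcongr
      linarith [hhc x hx]
    have a2 : p x * (v x ^ 2 * w x) ≤ M * (v x ^ 2 * w x) :=
      mul_le_mul_of_nonneg_right ((le_abs_self _).trans (hpM x hx)) (by positivity)
    have a3 : -(2 * v x * r x) * w x ≤ (v x ^ 2 + C₂ * u₀ x ^ 2) * w x :=
      mul_le_mul_of_nonneg_right (by nlinarith [sq_nonneg (v x + r x), hru x hx]) hwx.le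
    simp only [Q]
    linarith
  have hmono := setIntegral_mono_on (intg hlc)
    (((intg hQc).add ((intg hgc).const_mul (2 * M + 1 - 2 * s * c))).add
      ((intg hu₀c).const_mul C₂)) hDo.measurableSet hpt
  rw [integral_add' ((intg hQc).add ((intg hgc).const_mul _)) ((intg hu₀c).const_mul C₂),
    integral_add' (intg hQc) ((intg hgc).const_mul _), integral_const_mul, integral_const_mul]
    at hmono
  linarith

lemma setIntegral_exp_neg_mul_le {l T : ℝ} (hl : 0 < l) (hT : 0 < T) :
    ∫ t in Ioo 0 T, Real.exp (-(l * t)) ≤ 1 / l := by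
  have hd : ∀ t ∈ uIcc 0 T,
      HasDerivAt (fun t => -(Real.exp (-(l * t)) / l)) (Real.exp (-(l * t))) t := by
    intro t _
    refine (((((hasDerivAt_id t).const_mul l).neg).exp.div_const l).neg).congr_deriv ?_
    simp
    field_simp
  rw [← integral_Ioc_eq_integral_Ioo, ← intervalIntegral.integral_of_le hT.le,
    intervalIntegral.integral_eq_sub_of_hasDerivAt hd (Continuous.intervalIntegrable (by fun_prop) _ _)]
  have := div_pos (Real.exp_pos (-(l * T))) hl
  simp only [mul_zero, neg_zero, Real.exp_zero]
  linarith

/-- A Carleman estimate for the transport operator with weight `exp (2s (ψ - βt))`. -/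
lemma carleman_estimate {m k : ℕ} {D : Set (Esp m)} (hDo : IsOpen D)
    (hK : IsCompact (closure D)) {H : Esp m → Esp m} {B : Set (Esp k)} {G : Esp k → Esp m}
    {ω : Esp k → ℝ} {M N T : ℝ} (hT : 0 < T) (hM : 0 ≤ M)
    (hB : MeasurableSet B) (hG : ContinuousOn G B) (hGK : MapsTo G B (closure D))
    (hω : IntegrableOn ω B) (hω0 : ∀ x', 0 ≤ ω x')
    (htr : ∀ g Q : Esp m → ℝ, ContinuousOn g (closure D) → (∀ x ∈ closure D, 0 ≤ g x) →
      ContDiffOn ℝ 1 g D → ContinuousOn Q (closure D) → (∀ x ∈ D, Q x = fderiv ℝ g x (H x)) →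
      ∫ x in D, Q x ≤ M * (∫ x' in B, g (G x') * ω x') + N * ∫ x in D, g x)
    {ψ h p : Esp m → ℝ} {u r : Esp m → ℝ → ℝ} {s β c C₂ : ℝ} (hs : 0 < s) (hβ : 0 < β)
    (hs1 : 4 / T + N + 2 * M + 2 ≤ 2 * s * c) (hC₂ : 0 ≤ C₂) (hs2 : C₂ ≤ s * β)
    (hu : ContDiffOn ℝ 1 (fun q : Esp m × ℝ => u q.1 q.2) (closure D ×ˢ Icc 0 T))
    (hψ : ContinuousOn ψ (closure D)) (hψ1 : ContDiffOn ℝ 1 ψ D)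
    (hh : ContinuousOn h (closure D)) (hψh : ∀ x ∈ D, fderiv ℝ ψ x (H x) = h x)
    (hhc : ∀ x ∈ D, c + β ≤ h x) (hp : ContinuousOn p (closure D)) (hpM : ∀ x ∈ D, |p x| ≤ M)
    (hr : ContinuousOn (fun q : Esp m × ℝ => r q.1 q.2) (closure D ×ˢ Icc 0 T))
    (hru : ∀ x ∈ D, ∀ t ∈ Ioo 0 T, r x t ^ 2 ≤ C₂ * u x 0 ^ 2)
    (hpde : ∀ x ∈ D, ∀ t ∈ Ioo 0 T,
      timeDeriv T u x t + fderiv ℝ (fun z => u z t) x (H x) + p x * u x t = r x t) :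
    T / 2 * (∫ x in D, u x 0 ^ 2 * Real.exp (2 * s * ψ x)) +
      ∫ t in Ioo 0 T, (T - t) * ∫ x in D, u x t ^ 2 * Real.exp (2 * s * ψ x - 2 * s * β * t) ≤
    (∫ t in Ioo (3 * T / 4) T, ∫ x in D, u x t ^ 2 * Real.exp (2 * s * ψ x - 2 * s * β * t)) +
      T * M * ∫ t in Ioo 0 T, ∫ x' in B,
        u (G x') t ^ 2 * Real.exp (2 * s * ψ (G x') - 2 * s * β * t) * ω x' := by
  have hDK : D ⊆ closure D := subset_closure
  have huc := hu.continuousOn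
  have hutc : ContinuousOn (fun q : Esp m × ℝ => timeDeriv T u q.1 q.2) (closure D ×ˢ Icc 0 T) :=
    (contDiffOn_timeDeriv (n := 0) hT (by simpa using hu)).continuousOn
  have hu1 : ∀ t ∈ Icc 0 T, ContDiffOn ℝ 1 (fun x => u x t) D := fun t ht =>
    hu.comp (f := fun x => (x, t)) (by fun_prop) fun x hx => ⟨hDK hx, ht⟩
  have hψc : ContinuousOn (fun q : Esp m × ℝ => ψ q.1) (closure D ×ˢ Icc 0 T) :=
    hψ.comp continuousOn_fst fun q hq => hq.1
  have hwc : ContinuousOn (fun q : Esp m × ℝ => Real.exp (2 * s * ψ q.1 - 2 * s * β * q.2))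
      (closure D ×ˢ Icc 0 T) :=
    Real.continuous_exp.comp_continuousOn ((continuousOn_const.mul hψc).sub (by fun_prop))
  let z : Esp m → ℝ → ℝ := fun x t => u x t ^ 2 * Real.exp (2 * s * ψ x - 2 * s * β * t)
  let z' : Esp m → ℝ → ℝ := fun x t =>
    2 * u x t * timeDeriv T u x t * Real.exp (2 * s * ψ x - 2 * s * β * t) -
      2 * s * β * (u x t ^ 2 * Real.exp (2 * s * ψ x - 2 * s * β * t))
  have hzc : ContinuousOn (fun q : Esp m × ℝ => z q.1 q.2) (closure D ×ˢ Icc 0 T) :=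
    (huc.pow 2).mul hwc
  have hz'c : ContinuousOn (fun q : Esp m × ℝ => z' q.1 q.2) (closure D ×ˢ Icc 0 T) :=
    (((continuousOn_const.mul huc).mul hutc).mul hwc).sub (continuousOn_const.mul hzc)
  have hJc : ContinuousOn (fun q : Esp m × ℝ => z q.1 q.2 - (T - q.2) * z' q.1 q.2)
      (closure D ×ˢ Icc 0 T) := by fun_prop
  set W₀ := ∫ x in D, u x 0 ^ 2 * Real.exp (2 * s * ψ x) with hW₀
  have hW₀0 : 0 ≤ W₀ := integral_nonneg fun x => by positivity
  have hft : T * W₀ = ∫ t in Ioo 0 T, ∫ x in D, (z x t - (T - t) * z' x t) := by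
    rw [← setIntegral_swap_cylinder (F := fun x t => z x t - (T - t) * z' x t) hK hDK hJc, hW₀,
      ← integral_const_mul]
    refine setIntegral_congr_fun hDo.measurableSet fun x hx => ?_
    have := mul_eq_setIntegral_sub_mul_deriv hT (z := z x) (z' := z' x) (fun t ht => ?_)
      (continuousOn_time_slice hz'c (hDK hx))
    · rw [← this]; simp [z]
    have d1 : HasDerivWithinAt (u x) (timeDeriv T u x t) (Icc 0 T) t := by
      have := (hu.differentiableOn one_ne_zero (x, t) ⟨hDK hx, ht⟩).hasFDerivWithinAt
      exact (hasDerivWithinAt_slice (hDK hx) this).differentiableWithinAt.hasDerivWithinAt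
    have d2 := ((((hasDerivWithinAt_id t (Icc 0 T)).const_mul (2 * s * β)).const_sub
      (2 * s * ψ x))).exp
    refine ((d1.pow 2).mul d2).congr_deriv ?_
    simp [z']
    ring
  set a : ℝ → ℝ := fun t => ∫ x in D, z x t with ha
  set b : ℝ → ℝ := fun t => ∫ x' in B, z (G x') t * ω x' with hb
  have ha0 : ∀ t, 0 ≤ a t := fun t => integral_nonneg fun x => by simp only [z]; positivity
  have hb0 : ∀ t, 0 ≤ b t := fun t => integral_nonneg fun x => by
    have := hω0 x
    simp only [z]
    positivity
  have aint : IntegrableOn a (Ioo 0 T) := integrableOn_integral_space hK hDK hzc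
  have bint : IntegrableOn b (Ioo 0 T) := integrableOn_integral_trace hK hB hG hGK hω hzc
  have χaint : IntegrableOn (fun t => (T - t) * a t) (Ioo 0 T) := by
    refine Integrable.bdd_mul (c := T) aint (by fun_prop) ?_
    filter_upwards [ae_restrict_mem measurableSet_Ioo] with t ht
    rw [Real.norm_of_nonneg (by linarith [ht.2])]
    linarith [ht.1]
  have eint : IntegrableOn (fun t => Real.exp (-(2 * s * β * t))) (Ioo 0 T) :=
    (Continuous.integrableOn_Icc (by fun_prop)).mono_set Ioo_subset_Icc_self
  have hpt : ∀ t ∈ Ioo 0 T, ∫ x in D, (z x t - (T - t) * z' x t) ≤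
      (Ioo (3 * T / 4) T).indicator a t + T * M * b t + T * C₂ * W₀ * Real.exp (-(2 * s * β * t)) -
        (T - t) * a t := by
    intro t ht
    have ht' := Ioo_subset_Icc_self ht
    have h1 := setIntegral_weighted_slice_le hDo hK htr (v := fun x => u x t)
      (v' := fun x => timeDeriv T u x t) (ψ := ψ) (h := h) (p := p) (r := fun x => r x t)
      (u₀ := fun x => u x 0) (β := β) (c := c) (C₂ := C₂) (l := 2 * s * β * t) hs.le
      (continuousOn_space_slice huc ht') (hu1 t ht') (continuousOn_space_slice hutc ht')
      hψ hψ1 hh hψh hhc hp hpM (continuousOn_space_slice hr ht')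
      (continuousOn_space_slice huc ⟨le_rfl, hT.le⟩) (fun x hx => hru x hx t ht)
      (fun x hx => hpde x hx t ht)
    have h2 : ∫ x in D, u x 0 ^ 2 * Real.exp (2 * s * ψ x - 2 * s * β * t) =
        Real.exp (-(2 * s * β * t)) * W₀ := by
      rw [hW₀, ← integral_const_mul]
      refine integral_congr_ae (Filter.Eventually.of_forall fun x => ?_)
      simp only [sub_eq_add_neg, Real.exp_add]
      ring
    have h3 : ∫ x in D, (z x t - (T - t) * z' x t) = a t + (T - t) * ∫ x in D, -(z' x t) := by
      rw [integral_sub (integrableOn_space_slice hK hDK hzc ht')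
        ((integrableOn_space_slice hK hDK hz'c ht').const_mul _), integral_const_mul, integral_neg]
      ring
    rw [h2] at h1
    change ∫ x in D, -(z' x t) ≤ M * b t + (N + 2 * M + 1 - 2 * s * c) * a t +
      C₂ * (Real.exp (-(2 * s * β * t)) * W₀) at h1
    have hχ : 0 < T - t := by linarith [ht.2]
    have hχT : T - t ≤ T := by linarith [ht.1]
    have h4 := mul_le_mul_of_nonneg_left h1 hχ.le
    have h5 : (T - t) * (M * b t) ≤ T * (M * b t) :=
      mul_le_mul_of_nonneg_right hχT (mul_nonneg hM (hb0 t))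
    have h6 : (T - t) * (C₂ * (Real.exp (-(2 * s * β * t)) * W₀)) ≤
        T * (C₂ * (Real.exp (-(2 * s * β * t)) * W₀)) :=
      mul_le_mul_of_nonneg_right hχT (by positivity)
    have h7 : (T - t) * a t * (N + 2 * M + 1 - 2 * s * c) ≤ (T - t) * a t * (-(4 / T) - 1) :=
      mul_le_mul_of_nonneg_left (by linarith) (mul_nonneg hχ.le (ha0 t))
    have h8 : a t ≤ (T - t) * a t * (4 / T) + (Ioo (3 * T / 4) T).indicator a t := by
      by_cases hm : t ∈ Ioo (3 * T / 4) T
      · rw [indicator_of_mem hm]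
        have := ha0 t
        have : 0 ≤ (T - t) * a t * (4 / T) := by positivity
        linarith
      · rw [indicator_of_notMem hm]
        have h9 : t ≤ 3 * T / 4 := by
          by_contra! hlt
          exact hm ⟨hlt, ht.2⟩
        have h10 : 1 ≤ (T - t) * (4 / T) := by
          rw [mul_div_assoc', le_div_iff₀ hT]
          linarith
        nlinarith [ha0 t]
    rw [h3]
    linarith
  have indint : IntegrableOn ((Ioo (3 * T / 4) T).indicator a) (Ioo 0 T) :=
    aint.indicator measurableSet_Ioo
  have hmono := setIntegral_mono_on
    (integrableOn_integral_space (F := fun x t => z x t - (T - t) * z' x t) hK hDK hJc)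
    (((indint.add (bint.const_mul (T * M))).add (eint.const_mul (T * C₂ * W₀))).sub χaint)
    measurableSet_Ioo hpt
  rw [← hft, integral_sub' ((indint.add (bint.const_mul _)).add (eint.const_mul _)) χaint,
    integral_add' (indint.add (bint.const_mul _)) (eint.const_mul _),
    integral_add' indint (bint.const_mul _), integral_const_mul, integral_const_mul,
    setIntegral_indicator measurableSet_Ioo,
    inter_eq_self_of_subset_right (Ioo_subset_Ioo_left (by positivity))] at hmono
  have he := mul_le_mul_of_nonneg_left
    (setIntegral_exp_neg_mul_le (l := 2 * s * β) (by positivity) hT)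
    (show 0 ≤ T * C₂ * W₀ by positivity)
  have he2 : T * C₂ * W₀ * (1 / (2 * s * β)) ≤ T / 2 * W₀ := by
    rw [mul_one_div, div_le_iff₀ (by positivity)]
    have := mul_le_mul_of_nonneg_left hs2 (show 0 ≤ T * W₀ by positivity)
    linarith
  change T / 2 * W₀ + ∫ t in Ioo 0 T, (T - t) * a t ≤
    (∫ t in Ioo (3 * T / 4) T, a t) + T * M * ∫ t in Ioo 0 T, b t
  linarith

/-- Optimizing the free parameter in an exponentially weighted estimate gives a Hölder estimate. -/
lemma holder_of_forall_exp {X q C b s₀ : ℝ} (hq : 0 < q) (hC : 0 ≤ C) (hb : 0 ≤ b) (hs₀ : 0 ≤ s₀)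
    (hX : ∀ s, s₀ ≤ s → X ≤ C * (Real.exp (-(3 * q * s)) + Real.exp (9 * q * s) * b)) :
    X ≤ C * (2 * Real.exp (9 * q * s₀)) * (b ^ (1 / 4 : ℝ) + b) := by
  have hE : 1 ≤ Real.exp (9 * q * s₀) := Real.one_le_exp (by positivity)
  have hE' : Real.exp (-(3 * q * s₀)) ≤ 1 := Real.exp_le_one_iff.2 (by simp; positivity)
  have hb4 : 0 ≤ b ^ (1 / 4 : ℝ) := Real.rpow_nonneg hb _
  rcases le_or_gt 1 b with h1 | h1
  · refine (hX s₀ le_rfl).trans ?_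
    rw [mul_assoc C]
    refine mul_le_mul_of_nonneg_left ?_ hC
    nlinarith [mul_nonneg hb4 (Real.exp_pos (9 * q * s₀)).le]
  rcases hb.eq_or_lt with rfl | hbpos
  · have hlim : Filter.Tendsto (fun s : ℝ => C * (Real.exp (-(3 * q * s)) +
        Real.exp (9 * q * s) * 0)) Filter.atTop (nhds (C * 0)) := by
      simp only [mul_zero, add_zero]
      rw [← mul_zero C]
      refine Filter.Tendsto.const_mul C (Real.tendsto_exp_neg_atTop_nhds_zero.comp ?_)
      exact Filter.tendsto_id.const_mul_atTop (by positivity)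
    have := ge_of_tendsto hlim ((Filter.eventually_ge_atTop s₀).mono hX)
    simpa using this
  · set s := s₀ + -Real.log b / (12 * q) with hs
    have hlog : Real.log b < 0 := Real.log_neg hbpos h1
    have hss : s₀ ≤ s := by
      rw [hs, le_add_iff_nonneg_right]
      exact div_nonneg (by linarith) (by positivity)
    have e1 : Real.exp (-(3 * q * s)) = Real.exp (-(3 * q * s₀)) * b ^ (1 / 4 : ℝ) := by
      rw [Real.rpow_def_of_pos hbpos, ← Real.exp_add, hs]
      congr 1
      field_simp
      ring
    have e2 : Real.exp (9 * q * s) * b = Real.exp (9 * q * s₀) * b ^ (1 / 4 : ℝ) := by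
      have h : Real.exp (9 * q * s) * b = Real.exp (9 * q * s) * Real.exp (Real.log b) := by
        rw [Real.exp_log hbpos]
      rw [h, Real.rpow_def_of_pos hbpos, ← Real.exp_add, ← Real.exp_add, hs]
      congr 1
      field_simp
      ring
    refine (hX s hss).trans ?_
    rw [e1, e2, mul_assoc C]
    refine mul_le_mul_of_nonneg_left ?_ hC
    nlinarith [mul_nonneg hb (Real.exp_pos (9 * q * s₀)).le,
      mul_le_mul_of_nonneg_right (hE'.trans hE) hb4]

/-- A function vanishing at `0` is controlled in square by the integral of its squared derivative. -/
lemma sq_le_mul_setIntegral_sq {T t : ℝ} {v v' : ℝ → ℝ} (ht : t ∈ Ioo 0 T) (hv0 : v 0 = 0)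
    (hv : ∀ τ ∈ Icc 0 T, HasDerivWithinAt v (v' τ) (Icc 0 T) τ) (hv' : ContinuousOn v' (Icc 0 T)) :
    v t ^ 2 ≤ T * ∫ τ in Ioo 0 T, v' τ ^ 2 := by
  have hsub : Icc 0 t ⊆ Icc 0 T := Icc_subset_Icc_right ht.2.le
  have hvc : ContinuousOn v (Icc 0 T) := fun τ hτ => (hv τ hτ).continuousWithinAt
  have h_int : IntervalIntegrable v' volume 0 t :=
    (hv'.mono hsub).intervalIntegrable_of_Icc ht.1.le
  have h_int_sq : IntervalIntegrable (fun τ => v' τ ^ 2) volume 0 t :=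
    ((hv'.pow 2).mono hsub).intervalIntegrable_of_Icc ht.1.le
  have hftc : ∫ τ in (0)..t, v' τ = v t := by
    rw [intervalIntegral.integral_eq_sub_of_hasDerivAt_of_le ht.1.le (hvc.mono hsub)
      (fun τ hτ => (hv τ ⟨hτ.1.le, hτ.2.le.trans ht.2.le⟩).hasDerivAt
        (Icc_mem_nhds hτ.1 (hτ.2.trans ht.2))) h_int, hv0, sub_zero]
  have hpos : 0 ≤ ∫ τ in (0)..t, (v' τ - v t / t) ^ 2 :=
    intervalIntegral.integral_nonneg ht.1.le fun τ _ => sq_nonneg _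
  have hexp : ∫ τ in (0)..t, (v' τ - v t / t) ^ 2 =
      (∫ τ in (0)..t, v' τ ^ 2) - v t ^ 2 / t := by
    have : ∀ τ, (v' τ - v t / t) ^ 2 = v' τ ^ 2 - 2 * (v t / t) * v' τ + (v t / t) ^ 2 :=
      fun τ => by ring
    simp only [this]
    rw [intervalIntegral.integral_add (h_int_sq.sub (h_int.const_mul _)) (by simp),
      intervalIntegral.integral_sub h_int_sq (h_int.const_mul _),
      intervalIntegral.integral_const_mul, hftc, intervalIntegral.integral_const]
    have := ht.1.ne'
    simp only [sub_zero, smul_eq_mul]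
    field_simp
    ring
  have hmono : ∫ τ in (0)..t, v' τ ^ 2 ≤ ∫ τ in Ioo 0 T, v' τ ^ 2 := by
    rw [intervalIntegral.integral_of_le ht.1.le]
    refine setIntegral_mono_set ((hv'.pow 2).integrableOn_Icc.mono_set Ioo_subset_Icc_self)
      (Filter.Eventually.of_forall fun τ => sq_nonneg _) ?_
    exact Filter.Eventually.of_forall fun τ hτ => ⟨hτ.1, hτ.2.trans_lt ht.2⟩
  have h1 : v t ^ 2 ≤ t * ∫ τ in (0)..t, v' τ ^ 2 := by
    have h : v t ^ 2 / t ≤ ∫ τ in (0)..t, v' τ ^ 2 := by linarith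
    rw [div_le_iff₀ ht.1] at h
    linarith
  have h0 : 0 ≤ ∫ τ in Ioo 0 T, v' τ ^ 2 := integral_nonneg fun τ => sq_nonneg _
  calc v t ^ 2 ≤ t * ∫ τ in (0)..t, v' τ ^ 2 := h1
    _ ≤ t * ∫ τ in Ioo 0 T, v' τ ^ 2 := mul_le_mul_of_nonneg_left hmono ht.1.le
    _ ≤ T * ∫ τ in Ioo 0 T, v' τ ^ 2 := mul_le_mul_of_nonneg_right ht.2.le h0

lemma integrableOn_sq_iSup {m : ℕ} {T : ℝ} (hT : 0 < T) {D : Set (Esp m)} [Nonempty D]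
    (hK : IsCompact (closure D)) {u : Esp m → ℝ → ℝ}
    (hu : ContinuousOn (fun q : Esp m × ℝ => u q.1 q.2) (closure D ×ˢ Icc 0 T)) :
    IntegrableOn (fun t => (⨆ x : D, |u x t|) ^ 2) (Ioo 0 T) := by
  obtain ⟨C, hC⟩ := (hK.prod isCompact_Icc).exists_bound_of_continuousOn hu
  have hCx : ∀ (x : D) t, t ∈ Icc 0 T → |u x t| ≤ C := fun x t ht =>
    hC (x, t) ⟨subset_closure x.2, ht⟩
  have hlsc : LowerSemicontinuous fun t => ⨆ x : D, |u x (projIcc 0 T hT.le t)| := by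
    refine lowerSemicontinuous_ciSup (fun t => ⟨C, ?_⟩) fun x => ?_
    · rintro _ ⟨x, rfl⟩
      exact hCx x _ (projIcc 0 T hT.le t).2
    · have hc := continuousOn_time_slice hu (subset_closure x.2)
      exact ((continuousOn_iff_continuous_domRestrict.1 hc).comp continuous_projIcc).abs.lowerSemicontinuous
  have h_int : IntegrableOn (fun t => (⨆ x : D, |u x (projIcc 0 T hT.le t)|) ^ 2) (Ioo 0 T) := by
    refine Measure.integrableOn_of_bounded (M := C ^ 2) (by simp)
      (hlsc.measurable.pow_const 2).aestronglyMeasurable ?_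
    filter_upwards with t
    have h0 : 0 ≤ ⨆ x : D, |u x (projIcc 0 T hT.le t)| := Real.iSup_nonneg fun x => abs_nonneg _
    rw [Real.norm_of_nonneg (by positivity)]
    exact pow_le_pow_left₀ h0 (ciSup_le fun x => hCx x _ (projIcc 0 T hT.le t).2) 2
  refine h_int.congr_fun (fun t ht => ?_) measurableSet_Ioo
  simp only [projIcc_of_mem hT.le (Ioo_subset_Icc_self ht)]

/-- The a priori bound in `L²(0,T; L^∞)` controls the energy on a final time interval. -/
lemma setIntegral_energy_le_of_iSup {m : ℕ} {T a M₀ : ℝ} (hT : 0 < T) (ha : 0 ≤ a) {D : Set (Esp m)}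
    (hne : D.Nonempty) (hDo : IsOpen D) (hK : IsCompact (closure D)) {u : Esp m → ℝ → ℝ}
    (hu : ContinuousOn (fun q : Esp m × ℝ => u q.1 q.2) (closure D ×ˢ Icc 0 T))
    (hM₀ : ∫ t in Ioo 0 T, (⨆ x : D, |u x t|) ^ 2 ≤ M₀ ^ 2) :
    ∫ t in Ioo a T, ∫ x in D, u x t ^ 2 ≤ volume.real D * M₀ ^ 2 := by
  have : Nonempty D := hne.to_subtype
  have hDfin : volume D ≠ ⊤ := ((measure_mono subset_closure).trans_lt hK.measure_lt_top).ne
  obtain ⟨C, hC⟩ := (hK.prod isCompact_Icc).exists_bound_of_continuousOn hu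
  have hu2 : ContinuousOn (fun q : Esp m × ℝ => u q.1 q.2 ^ 2) (closure D ×ˢ Icc 0 T) := hu.pow 2
  have hsup := integrableOn_sq_iSup hT hK hu
  have hsub : Ioo a T ⊆ Ioo 0 T := Ioo_subset_Ioo_left ha
  have hpt : ∀ t ∈ Ioo 0 T, ∫ x in D, u x t ^ 2 ≤ volume.real D * (⨆ x : D, |u x t|) ^ 2 := by
    intro t ht
    have ht' := Ioo_subset_Icc_self ht
    rw [← smul_eq_mul, ← setIntegral_const]
    refine setIntegral_mono_on
      (integrableOn_space_slice (F := fun x t => u x t ^ 2) hK subset_closure hu2 ht')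
      (integrableOn_const hDfin) hDo.measurableSet fun x hx => ?_
    rw [← sq_abs (u x t)]
    refine pow_le_pow_left₀ (abs_nonneg _) (le_ciSup (f := fun x : D => |u x t|) ⟨C, ?_⟩ ⟨x, hx⟩) 2
    rintro _ ⟨x, rfl⟩
    exact hC (x, t) ⟨subset_closure x.2, ht'⟩
  calc ∫ t in Ioo a T, ∫ x in D, u x t ^ 2 ≤ ∫ t in Ioo 0 T, ∫ x in D, u x t ^ 2 :=
        setIntegral_mono_set
          (integrableOn_integral_space (F := fun x t => u x t ^ 2) hK subset_closure hu2)
          (Filter.Eventually.of_forall fun t => integral_nonneg fun x => sq_nonneg _)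
          hsub.eventuallyLE
    _ ≤ ∫ t in Ioo 0 T, volume.real D * (⨆ x : D, |u x t|) ^ 2 :=
        setIntegral_mono_on
          (integrableOn_integral_space (F := fun x t => u x t ^ 2) hK subset_closure hu2)
          (hsup.const_mul _) measurableSet_Ioo hpt
    _ ≤ _ := by
        rw [integral_const_mul]
        exact mul_le_mul_of_nonneg_left hM₀ measureReal_nonneg

/-- Estimating the Carleman weight from below near the initial time and from above elsewhere. -/
lemma energy_le_of_carleman {m k : ℕ} {D : Set (Esp m)} (hDo : IsOpen D)
    (hK : IsCompact (closure D)) {B : Set (Esp k)} {G : Esp k → Esp m}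
    {ω : Esp k → ℝ} {M T : ℝ} (hT : 0 < T) (hM : 0 ≤ M)
    (hB : MeasurableSet B) (hG : ContinuousOn G B) (hGK : MapsTo G B (closure D))
    (hω : IntegrableOn ω B) (hω0 : ∀ x', 0 ≤ ω x')
    {ψ : Esp m → ℝ} {u : Esp m → ℝ → ℝ} {s β q : ℝ} (hs : 0 < s) (hβ : 0 < β)
    (hβq : β * T = 16 * q)
    (hu : ContinuousOn (fun q : Esp m × ℝ => u q.1 q.2) (closure D ×ˢ Icc 0 T))
    (hψ : ContinuousOn ψ (closure D)) (hψq : ∀ x ∈ closure D, |ψ x| ≤ 4 * q)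
    (hcar : T / 2 * (∫ x in D, u x 0 ^ 2 * Real.exp (2 * s * ψ x)) +
      ∫ t in Ioo 0 T, (T - t) * ∫ x in D, u x t ^ 2 * Real.exp (2 * s * ψ x - 2 * s * β * t) ≤
      (∫ t in Ioo (3 * T / 4) T, ∫ x in D, u x t ^ 2 * Real.exp (2 * s * ψ x - 2 * s * β * t)) +
        T * M * ∫ t in Ioo 0 T, ∫ x' in B,
          u (G x') t ^ 2 * Real.exp (2 * s * ψ (G x') - 2 * s * β * t) * ω x') :
    T / 2 * Real.exp (-(10 * q * s)) * ((∫ x in D, u x 0 ^ 2) +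
        ∫ t in Ioo 0 (T / 16), ∫ x in D, u x t ^ 2) ≤
      Real.exp (-(16 * q * s)) * (∫ t in Ioo (3 * T / 4) T, ∫ x in D, u x t ^ 2) +
        T * M * Real.exp (8 * q * s) *
          ∫ t in Ioo 0 T, ∫ x' in B, u (G x') t ^ 2 * ω x' := by
  have hDK : D ⊆ closure D := subset_closure
  have hψc : ContinuousOn (fun q : Esp m × ℝ => ψ q.1) (closure D ×ˢ Icc 0 T) :=
    hψ.comp continuousOn_fst fun q hq => hq.1
  have hu2 : ContinuousOn (fun q : Esp m × ℝ => u q.1 q.2 ^ 2) (closure D ×ˢ Icc 0 T) := hu.pow 2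
  let z : Esp m → ℝ → ℝ := fun x t => u x t ^ 2 * Real.exp (2 * s * ψ x - 2 * s * β * t)
  have hzc : ContinuousOn (fun q : Esp m × ℝ => z q.1 q.2) (closure D ×ˢ Icc 0 T) :=
    hu2.mul (Real.continuous_exp.comp_continuousOn
      ((continuousOn_const.mul hψc).sub (by fun_prop)))
  have h0 : (0 : ℝ) ∈ Icc 0 T := ⟨le_rfl, hT.le⟩
  have hq : 0 < q := by nlinarith [mul_pos hβ hT]
  have hlow : ∀ x ∈ closure D, -(8 * q * s) ≤ 2 * s * ψ x := fun x hx => by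
    nlinarith [(abs_le.1 (hψq x hx)).1]
  have hup : ∀ x ∈ closure D, 2 * s * ψ x ≤ 8 * q * s := fun x hx => by
    nlinarith [(abs_le.1 (hψq x hx)).2]
  have initial : Real.exp (-(10 * q * s)) * (∫ x in D, u x 0 ^ 2) ≤
      ∫ x in D, u x 0 ^ 2 * Real.exp (2 * s * ψ x) := by
    rw [← integral_const_mul]
    refine setIntegral_mono_on
      ((integrableOn_space_slice (F := fun x t => u x t ^ 2) hK hDK hu2 h0).const_mul _)
      (by simpa [z] using integrableOn_space_slice hK hDK hzc h0) hDo.measurableSet fun x hx => ?_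
    rw [mul_comm]
    refine mul_le_mul_of_nonneg_left (Real.exp_le_exp.2 ?_) (sq_nonneg _)
    nlinarith [hlow x (hDK hx), mul_pos hq hs]
  have aint : IntegrableOn (fun t => ∫ x in D, z x t) (Ioo 0 T) :=
    integrableOn_integral_space hK hDK hzc
  have uint : IntegrableOn (fun t => ∫ x in D, u x t ^ 2) (Ioo 0 T) :=
    integrableOn_integral_space (F := fun x t => u x t ^ 2) hK hDK hu2
  have ha0 : ∀ t, 0 ≤ ∫ x in D, z x t := fun t => integral_nonneg fun x => by
    simp only [z]; positivity
  have χaint : IntegrableOn (fun t => (T - t) * ∫ x in D, z x t) (Ioo 0 T) := by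
    refine Integrable.bdd_mul (c := T) aint (by fun_prop) ?_
    filter_upwards [ae_restrict_mem measurableSet_Ioo] with t ht
    rw [Real.norm_of_nonneg (by linarith [ht.2])]
    linarith [ht.1]
  have early : T / 2 * Real.exp (-(10 * q * s)) * (∫ t in Ioo 0 (T / 16), ∫ x in D, u x t ^ 2) ≤
      ∫ t in Ioo 0 T, (T - t) * ∫ x in D, z x t := by
    have hsub : Ioo 0 (T / 16) ⊆ Ioo 0 T := Ioo_subset_Ioo_right (by linarith)
    rw [← integral_const_mul]
    refine le_trans (setIntegral_mono_on ((uint.mono_set hsub).const_mul _) (χaint.mono_set hsub)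
      measurableSet_Ioo fun t ht => ?_) (setIntegral_mono_set χaint ?_ hsub.eventuallyLE)
    · have ht' := Ioo_subset_Icc_self (hsub ht)
      have h1 : Real.exp (-(10 * q * s)) * (∫ x in D, u x t ^ 2) ≤ ∫ x in D, z x t := by
        rw [← integral_const_mul]
        refine setIntegral_mono_on
          ((integrableOn_space_slice (F := fun x t => u x t ^ 2) hK hDK hu2 ht').const_mul _)
          (integrableOn_space_slice hK hDK hzc ht') hDo.measurableSet fun x hx => ?_
        rw [mul_comm]
        refine mul_le_mul_of_nonneg_left (Real.exp_le_exp.2 ?_) (sq_nonneg _)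
        have h2 : β * t ≤ q := by nlinarith [ht.2]
        nlinarith [hlow x (hDK hx)]
      rw [mul_assoc]
      exact mul_le_mul (by linarith [ht.2]) h1
        (mul_nonneg (Real.exp_pos _).le (integral_nonneg fun x => sq_nonneg _)) (by linarith [ht.2])
    · filter_upwards [ae_restrict_mem measurableSet_Ioo] with t ht
      exact mul_nonneg (by linarith [ht.2]) (ha0 t)
  have late : (∫ t in Ioo (3 * T / 4) T, ∫ x in D, z x t) ≤
      Real.exp (-(16 * q * s)) * ∫ t in Ioo (3 * T / 4) T, ∫ x in D, u x t ^ 2 := by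
    have hsub : Ioo (3 * T / 4) T ⊆ Ioo 0 T := Ioo_subset_Ioo_left (by positivity)
    rw [← integral_const_mul]
    refine setIntegral_mono_on (aint.mono_set hsub) ((uint.mono_set hsub).const_mul _)
      measurableSet_Ioo fun t ht => ?_
    have ht' := Ioo_subset_Icc_self (hsub ht)
    rw [← integral_const_mul]
    refine setIntegral_mono_on (integrableOn_space_slice hK hDK hzc ht')
      ((integrableOn_space_slice (F := fun x t => u x t ^ 2) hK hDK hu2 ht').const_mul _)
      hDo.measurableSet fun x hx => ?_
    rw [mul_comm (Real.exp _)]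
    refine mul_le_mul_of_nonneg_left (Real.exp_le_exp.2 ?_) (sq_nonneg _)
    have h2 : 12 * q ≤ β * t := by nlinarith [ht.1]
    nlinarith [hup x (hDK hx)]
  have trace : ∫ t in Ioo 0 T, ∫ x' in B, z (G x') t * ω x' ≤
      Real.exp (8 * q * s) * ∫ t in Ioo 0 T, ∫ x' in B, u (G x') t ^ 2 * ω x' := by
    rw [← integral_const_mul]
    refine setIntegral_mono_on (integrableOn_integral_trace hK hB hG hGK hω hzc)
      ((integrableOn_integral_trace (F := fun x t => u x t ^ 2) hK hB hG hGK hω hu2).const_mul _)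
      measurableSet_Ioo fun t ht => ?_
    have ht' := Ioo_subset_Icc_self ht
    have traceint : ∀ {F : Esp m → ℝ → ℝ},
        ContinuousOn (fun q : Esp m × ℝ => F q.1 q.2) (closure D ×ˢ Icc 0 T) →
        IntegrableOn (fun x' => F (G x') t * ω x') B := fun {F} hF => by
      have hc := continuousOn_space_slice hF ht'
      obtain ⟨C, hC⟩ := hK.exists_bound_of_continuousOn hc
      refine Integrable.bdd_mul (c := C) hω ((hc.comp hG hGK).aestronglyMeasurable hB) ?_
      filter_upwards [ae_restrict_mem hB] with x' hx' using hC _ (hGK hx')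
    rw [← integral_const_mul]
    refine setIntegral_mono_on (traceint hzc)
      ((traceint (F := fun x t => u x t ^ 2) hu2).const_mul _) hB fun x' hx' => ?_
    rw [← mul_assoc, mul_comm (Real.exp _)]
    refine mul_le_mul_of_nonneg_right (mul_le_mul_of_nonneg_left (Real.exp_le_exp.2 ?_)
      (sq_nonneg _)) (hω0 x')
    have : 0 < s * β * t := mul_pos (mul_pos hs hβ) ht.1
    linarith [hup _ (hGK hx')]
  have i1 := mul_le_mul_of_nonneg_left initial (show 0 ≤ T / 2 by positivity)
  have i2 := mul_le_mul_of_nonneg_left trace (show 0 ≤ T * M by positivity)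
  change _ + (∫ t in Ioo 0 T, (T - t) * ∫ x in D, z x t) ≤
    (∫ t in Ioo (3 * T / 4) T, ∫ x in D, z x t) +
      T * M * ∫ t in Ioo 0 T, ∫ x' in B, z (G x') t * ω x' at hcar
  linarith

/-- The solution is controlled by its time derivative, as it vanishes initially. -/
lemma setIntegral_sq_add_sq_timeDeriv_le {m : ℕ} {D : Set (Esp m)} (hDo : IsOpen D)
    (hK : IsCompact (closure D)) {T ε : ℝ} (hε : 0 < ε) (hεT : ε < T) {y : Esp m → ℝ → ℝ}
    (hy : ContDiffOn ℝ 1 (fun q : Esp m × ℝ => y q.1 q.2) (closure D ×ˢ Icc 0 T))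
    (hy0 : ∀ x ∈ D, y x 0 = 0) :
    ∫ t in Ioo 0 ε, ∫ x in D, (y x t ^ 2 + timeDeriv T y x t ^ 2) ≤
      (1 + T ^ 2) * ∫ t in Ioo 0 ε, ∫ x in D, timeDeriv T y x t ^ 2 := by
  have hT := hε.trans hεT
  have hDK : D ⊆ closure D := subset_closure
  have hsub : Icc 0 ε ⊆ Icc 0 T := Icc_subset_Icc_right hεT.le
  have hprod : closure D ×ˢ Icc 0 ε ⊆ closure D ×ˢ Icc 0 T := prod_mono le_rfl hsub
  have hu : ContinuousOn (fun q : Esp m × ℝ => timeDeriv T y q.1 q.2) (closure D ×ˢ Icc 0 T) :=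
    (contDiffOn_timeDeriv (n := 0) hT (by simpa using hy)).continuousOn
  have hu2 : ContinuousOn (fun q : Esp m × ℝ => timeDeriv T y q.1 q.2 ^ 2)
      (closure D ×ˢ Icc 0 ε) := (hu.mono hprod).pow 2
  have hy2 : ContinuousOn (fun q : Esp m × ℝ => y q.1 q.2 ^ 2)
      (closure D ×ˢ Icc 0 ε) := (hy.continuousOn.mono hprod).pow 2
  set N := ∫ t in Ioo 0 ε, ∫ x in D, timeDeriv T y x t ^ 2 with hN
  have hN0 : 0 ≤ N := integral_nonneg fun t => integral_nonneg fun x => sq_nonneg _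
  have hpt : ∀ t ∈ Ioo 0 ε, ∫ x in D, y x t ^ 2 ≤ ε * N := by
    intro t ht
    rw [hN, ← setIntegral_swap_cylinder (F := fun x t => timeDeriv T y x t ^ 2) hK hDK hu2,
      ← integral_const_mul]
    refine setIntegral_mono_on (integrableOn_space_slice (F := fun x t => y x t ^ 2) hK hDK hy2
      (Ioo_subset_Icc_self ht)) ((integrable_cylinder (F := fun x t => timeDeriv T y x t ^ 2)
        hK hDK hu2).integral_prod_left.const_mul ε) hDo.measurableSet fun x hx => ?_
    refine sq_le_mul_setIntegral_sq ht (hy0 x hx) (fun τ hτ => ?_)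
      (continuousOn_time_slice (hu.mono hprod) (hDK hx))
    have := (hy.differentiableOn one_ne_zero (x, τ) ⟨hDK hx, hsub hτ⟩).hasFDerivWithinAt
    exact ((hasDerivWithinAt_slice (hDK hx) this).differentiableWithinAt.hasDerivWithinAt).mono hsub
  have yint := integrableOn_integral_space (F := fun x t => y x t ^ 2) hK hDK hy2
  have uint := integrableOn_integral_space (F := fun x t => timeDeriv T y x t ^ 2) hK hDK hu2
  have hsplit : ∫ t in Ioo 0 ε, ∫ x in D, (y x t ^ 2 + timeDeriv T y x t ^ 2) =
      (∫ t in Ioo 0 ε, ∫ x in D, y x t ^ 2) + N := by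
    rw [hN, ← integral_add yint uint]
    refine setIntegral_congr_fun measurableSet_Ioo fun t ht => ?_
    exact integral_add
      (integrableOn_space_slice (F := fun x t => y x t ^ 2) hK hDK hy2 (Ioo_subset_Icc_self ht))
      (integrableOn_space_slice (F := fun x t => timeDeriv T y x t ^ 2) hK hDK hu2
        (Ioo_subset_Icc_self ht))
  have hyN : ∫ t in Ioo 0 ε, ∫ x in D, y x t ^ 2 ≤ ε * (ε * N) := by
    refine (setIntegral_mono_on yint (integrableOn_const (by simp)) measurableSet_Ioo hpt).trans ?_
    simp [hε.le]
  have : ε * (ε * N) ≤ T * (T * N) := by gcongr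
  rw [hsplit]
  linarith

section Weight

variable {m : ℕ} {H : Esp m → Esp m} {U : Set (Esp m)}

lemma contDiffOn_psiW (hH : ContDiffOn ℝ 1 H U) : ContDiffOn ℝ 1 (psiW H) U :=
  contDiffOn_id.inner ℝ hH

lemma fderiv_psiW_apply {x : Esp m} (hH : DifferentiableAt ℝ H x) :
    fderiv ℝ (psiW H) x (H x) = ‖H x‖ ^ 2 + ⟪x, fderiv ℝ H x (H x)⟫ := by
  have h := fderiv_inner_apply ℝ (differentiableAt_id (x := x)) hH (H x)
  rw [add_comm]
  change fderiv ℝ (fun z => ⟪z, H z⟫) x (H x) = _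
  simpa using h

end Weight

lemma sqrt_le_of_weighted_energy {P V W T q s b : ℝ} (hT : 0 < T) (hV : 0 ≤ V) (hW : 0 ≤ W)
    (hb : 0 ≤ b)
    (h : T / 2 * Real.exp (-(10 * q * s)) * P ≤
      Real.exp (-(16 * q * s)) * V + W * Real.exp (8 * q * s) * b ^ 2) :
    √P ≤ √(2 / T * (V + W)) * (Real.exp (-(3 * q * s)) + Real.exp (9 * q * s) * b) := by
  have e1 : Real.exp (-(16 * q * s)) = Real.exp (-(10 * q * s)) * Real.exp (-(3 * q * s)) ^ 2 := by
    rw [← Real.exp_nat_mul, ← Real.exp_add]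
    congr 1
    push_cast
    ring
  have e2 : Real.exp (8 * q * s) = Real.exp (-(10 * q * s)) * Real.exp (9 * q * s) ^ 2 := by
    rw [← Real.exp_nat_mul, ← Real.exp_add]
    congr 1
    push_cast
    ring
  rw [e1, e2] at h
  have hE := Real.exp_pos (-(10 * q * s))
  set x := Real.exp (-(3 * q * s))
  set z := Real.exp (9 * q * s)
  have hx : 0 < x := Real.exp_pos _
  have hz : 0 < z := Real.exp_pos _
  have h1 : T / 2 * P ≤ V * x ^ 2 + W * (z * b) ^ 2 := by
    refine le_of_mul_le_mul_left ?_ hE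
    linarith
  have h2 : P ≤ 2 / T * (V + W) * (x + z * b) ^ 2 := by
    have h3 : V * x ^ 2 + W * (z * b) ^ 2 ≤ (V + W) * (x + z * b) ^ 2 := by
      have i1 : x ^ 2 ≤ (x + z * b) ^ 2 := by gcongr; nlinarith [mul_nonneg hz.le hb]
      have i2 : (z * b) ^ 2 ≤ (x + z * b) ^ 2 := by gcongr; linarith
      nlinarith [mul_le_mul_of_nonneg_left i1 hV, mul_le_mul_of_nonneg_left i2 hW]
    calc P = 2 / T * (T / 2 * P) := by field_simp
      _ ≤ 2 / T * ((V + W) * (x + z * b) ^ 2) :=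
          mul_le_mul_of_nonneg_left (h1.trans h3) (by positivity)
      _ = _ := by ring
  calc √P ≤ √(2 / T * (V + W) * (x + z * b) ^ 2) := Real.sqrt_le_sqrt h2
    _ = _ := by rw [Real.sqrt_mul (by positivity), Real.sqrt_sq (by positivity)]

/-- **Proposition 2** (conditional Hölder stability for the linearized source
problem). -/
theorem proposition2_conditional_holder_stability
    (d : ℕ) (hd : 1 ≤ d) (T M δ₀ ρ₁ : ℝ)
    (hT : 0 < T) (hM : 0 < M) (hδ₀ : 0 < δ₀) (hρ₁ : 0 < ρ₁)
    (ℓ ℓt : Esp d → ℝ)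
    (hℓ : ContDiffOn ℝ 2 ℓ (closedBall 0 ρ₁))
    (hℓt : ContDiffOn ℝ 2 ℓt (closedBall 0 ρ₁))
    (hℓtpos : ∀ x' : Esp d, ‖x'‖ < ρ₁ → 0 < ℓt x')
    (hℓt0 : ∀ x' : Esp d, ‖x'‖ = ρ₁ → ℓt x' = 0)
    (R : Esp (d+1) → ℝ → ℝ)
    (hR : ContDiffOn ℝ 2 (fun q : Esp (d+1) × ℝ => R q.1 q.2)
      (closure (graphDomain d ρ₁ ℓ ℓt) ×ˢ Icc 0 T))
    (H : Esp (d+1) → Esp (d+1))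
    (hH : IsAdmissible M δ₀ (closure (graphDomain d ρ₁ ℓ ℓt)) H)
    (p₁ : Esp (d+1) → ℝ) (hp₁ : ContinuousOn p₁ (closure (graphDomain d ρ₁ ℓ ℓt)))
    (hp₁b : ∀ x ∈ closure (graphDomain d ρ₁ ℓ ℓt), |p₁ x| ≤ M)
    (h0D : (0 : Esp (d+1)) ∈ closure (graphDomain d ρ₁ ℓ ℓt))
    (hdiam : Metric.diam (graphDomain d ρ₁ ℓ ℓt)
      < min 1 (min (δ₀ ^ 2 / (2 * M ^ 2)) (δ₀ ^ 2 * T / (16 * M))))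
    (hR0 : ∀ x ∈ closure (graphDomain d ρ₁ ℓ ℓt), R x 0 ≠ 0)
    (hHν₂ : ∀ x' : Esp d, ‖x'‖ < ρ₁ →
      ⟪H (graphMk d x' (ℓ x' - ℓt x')), nuDown d (fun z => ℓ z - ℓt z) x'⟫ ≤ 0)
    (M₀ : ℝ) (hM₀ : 0 < M₀) :
    ∃ C > (0:ℝ), ∃ θ₁ ∈ Set.Ioo (0:ℝ) 1, ∃ ε ∈ Set.Ioo (0:ℝ) T,
      ∀ (f : Esp (d+1) → ℝ) (y : Esp (d+1) → ℝ → ℝ),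
        ContinuousOn f (closure (graphDomain d ρ₁ ℓ ℓt)) →
        ContDiffOn ℝ 2 (fun q : Esp (d+1) × ℝ => y q.1 q.2)
          (closure (graphDomain d ρ₁ ℓ ℓt) ×ˢ Icc 0 T) →
        (∀ x ∈ graphDomain d ρ₁ ℓ ℓt, ∀ t ∈ Ioo (0:ℝ) T,
          deriv (y x) t + ⟪H x, gradient (fun z => y z t) x⟫ + p₁ x * y x t
            = R x t * f x) →
        (∀ x ∈ graphDomain d ρ₁ ℓ ℓt, y x 0 = 0) →
        (∫ t in Ioo 0 T,
          (⨆ x : graphDomain d ρ₁ ℓ ℓt, |deriv (y (x : Esp (d+1))) t|) ^ 2) ≤ M₀ ^ 2 →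
        Real.sqrt (∫ x in graphDomain d ρ₁ ℓ ℓt, (f x) ^ 2)
          + Real.sqrt (∫ t in Ioo 0 ε, ∫ x in graphDomain d ρ₁ ℓ ℓt,
              ((y x t) ^ 2 + (deriv (y x) t) ^ 2))
        ≤ C * ((Real.sqrt (∫ t in Ioo 0 T, ∫ x' in ball (0 : Esp d) ρ₁,
            (deriv (y (graphMk d x' (ℓ x'))) t) ^ 2 * omegaW d ℓ x')) ^ θ₁ + Real.sqrt (∫ t in Ioo 0 T, ∫ x' in ball (0 : Esp d) ρ₁,
            (deriv (y (graphMk d x' (ℓ x'))) t) ^ 2 * omegaW d ℓ x')) := by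
  obtain ⟨U, hUo, hUc, hDU, hH1, hHM, hDH, hHδ⟩ := hH
  have hℓ1 := hℓ.of_le (m := 1) (by norm_num)
  have hℓt1 := hℓt.of_le (m := 1) (by norm_num)
  set D := graphDomain d ρ₁ ℓ ℓt with hDdef
  have hDo : IsOpen D := isOpen_graphDomain hℓ.continuousOn hℓt.continuousOn
  have hDb : Bornology.IsBounded D := isBounded_graphDomain hℓ.continuousOn hℓt.continuousOn
  have hK : IsCompact (closure D) := hDb.isCompact_closure
  have hDK : D ⊆ closure D := subset_closure
  have hne : D.Nonempty := closure_nonempty_iff.1 ⟨0, h0D⟩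
  have h0T : (0 : ℝ) ∈ Icc 0 T := ⟨le_rfl, hT.le⟩
  obtain ⟨-, hdiam2, hdiam3⟩ := by simpa only [lt_min_iff] using hdiam
  rw [lt_div_iff₀ (by positivity)] at hdiam2 hdiam3
  have hnorm : ∀ x ∈ closure D, ‖x‖ ≤ diam D := fun x hx => by
    rw [← dist_zero_right, ← Metric.diam_closure]
    exact dist_le_diam_of_mem hK.isBounded hx h0D
  have hHc : ContinuousOn H (closure D) := hH1.continuousOn.mono hDU
  have hDHc : ContinuousOn (fderiv ℝ H) (closure D) :=
    (hH1.continuousOn_fderiv_of_isOpen hUo le_rfl).mono hDU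
  let h : Esp (d+1) → ℝ := fun x => ‖H x‖ ^ 2 + ⟪x, fderiv ℝ H x (H x)⟫
  have hhc : ContinuousOn h (closure D) :=
    (hHc.norm.pow 2).add (continuousOn_id.inner (hDHc.clm_apply hHc))
  have hψh : ∀ x ∈ D, fderiv ℝ (psiW H) x (H x) = h x := fun x hx => fderiv_psiW_apply
    ((hH1.contDiffAt (hUo.mem_nhds (hDU (hDK hx)))).differentiableAt one_ne_zero)
  have hψ1 : ContDiffOn ℝ 1 (psiW H) U := contDiffOn_psiW hH1
  have hhβ : ∀ x ∈ D, δ₀ ^ 2 / 4 + δ₀ ^ 2 / 4 ≤ h x := fun x hx => by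
    have hxK := hDK hx
    have i1 : δ₀ ^ 2 ≤ ‖H x‖ ^ 2 := by
      have := hHδ x hxK
      gcongr
    have i2 : |⟪x, fderiv ℝ H x (H x)⟫| ≤ diam D * (M * M) := by
      refine (abs_real_inner_le_norm _ _).trans ?_
      refine mul_le_mul (hnorm x hxK) (((fderiv ℝ H x).le_opNorm _).trans ?_) (norm_nonneg _)
        diam_nonneg
      exact mul_le_mul (hDH x (hDU hxK)) (hHM x (hDU hxK)) (norm_nonneg _) hM.le
    have i3 := (abs_le.1 i2).1
    simp only [h]
    linarith
  set q := δ₀ ^ 2 * T / 64 with hq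
  have hq0 : 0 < q := by positivity
  have hψq : ∀ x ∈ closure D, |psiW H x| ≤ 4 * q := fun x hx => by
    refine (abs_real_inner_le_norm _ _).trans ?_
    have : ‖x‖ * ‖H x‖ ≤ diam D * M :=
      mul_le_mul (hnorm x hx) (hHM x (hDU hx)) (norm_nonneg _) diam_nonneg
    rw [hq]
    linarith
  obtain ⟨x₀, hx₀, hmin⟩ := hK.exists_isMinOn ⟨0, h0D⟩
    (continuousOn_space_slice hR.continuousOn h0T).abs
  set r₀ := |R x₀ 0| with hr₀
  have hr₀0 : 0 < r₀ := abs_pos.2 (hR0 x₀ hx₀)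
  have hr₀R : ∀ x ∈ closure D, r₀ ≤ |R x 0| := fun x hx => hmin hx
  have hR' : ContinuousOn (fun q : Esp (d+1) × ℝ => timeDeriv T R q.1 q.2)
      (closure D ×ˢ Icc 0 T) :=
    (contDiffOn_timeDeriv (n := 1) hT (hR.of_le (by norm_num))).continuousOn
  obtain ⟨r₁, hr₁⟩ := (hK.prod isCompact_Icc).exists_bound_of_continuousOn hR'
  set β := δ₀ ^ 2 / 4 with hβ
  have hβ0 : 0 < β := by positivity
  set N := (d + 1) * M with hN
  have hN0 : 0 ≤ N := by positivity
  set C₂ := (r₁ / r₀) ^ 2 with hC₂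
  set s₀ := 1 + (4 / T + N + 2 * M + 2) / (2 * β) + C₂ / β with hs₀
  have hs₀0 : 0 < s₀ := by positivity
  set V := volume.real D * M₀ ^ 2 with hV
  have hV0 : 0 ≤ V := by positivity
  set C₅ := 1 / r₀ + √(1 + T ^ 2) with hC₅
  have hC₅0 : 0 < C₅ := by positivity
  have hωint : IntegrableOn (fun x' => omegaW d ℓ x') (ball 0 ρ₁) := by
    simpa using integrableOn_trace_omegaW hρ₁ hℓ1 (c := fun _ => 1) continuousOn_const
      (A := 1) (fun x' _ => by simp)
  have hGc := continuousOn_graph hℓ.continuousOn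
  have hGK : MapsTo (fun x' => graphMk d x' (ℓ x')) (ball 0 ρ₁) (closure D) := fun x' hx' => by
    have hx : ‖x'‖ < ρ₁ := by simpa using hx'
    exact graphMk_mem_closure_graphDomain hx (hℓtpos _ hx) (by linarith [hℓtpos _ hx]) le_rfl
  refine ⟨C₅ * √(2 / T * (V + T * M)) * (2 * Real.exp (9 * q * s₀)), by positivity, 1 / 4,
    ⟨by norm_num, by norm_num⟩, T / 16, ⟨by positivity, by linarith⟩, ?_⟩
  intro f y hf hy hpde hy0 hyM₀
  have hyD := hy.mono (prod_mono hDK (le_refl (Icc 0 T)))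
  have hRD := hR.mono (prod_mono hDK (le_refl (Icc 0 T)))
  have hpde' : ∀ x ∈ D, ∀ t ∈ Ioo 0 T,
      deriv (y x) t + fderiv ℝ (fun z => y z t) x (H x) + p₁ x * y x t = R x t * f x :=
    fun x hx t ht => by
      rw [← hpde x hx t ht, real_inner_comm, gradient, InnerProductSpace.toDual_symm_apply]
  set u := timeDeriv T y with hu
  have hu1 : ContDiffOn ℝ 1 (fun q : Esp (d+1) × ℝ => u q.1 q.2) (closure D ×ˢ Icc 0 T) :=
    contDiffOn_timeDeriv (n := 1) hT (hy.of_le (by norm_num))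
  have hupde := fun x hx t ht => timeDeriv_transport hDo hyD hRD hpde' (x := x) hx (t := t) ht
  have hu0 : ∀ x ∈ D, u x 0 = R x 0 * f x := fun x hx =>
    timeDeriv_zero hT hDo hyD hRD.continuousOn hpde' hy0 hx
  have hfu : ∀ x ∈ D, f x ^ 2 ≤ (1 / r₀) ^ 2 * u x 0 ^ 2 := fun x hx => by
    have i1 : r₀ ^ 2 ≤ R x 0 ^ 2 := by
      rw [← sq_abs (R x 0)]
      exact pow_le_pow_left₀ hr₀0.le (hr₀R x (hDK hx)) 2
    rw [hu0 x hx, one_div, inv_pow, mul_pow, inv_mul_eq_div, le_div_iff₀ (by positivity)]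
    nlinarith [mul_le_mul_of_nonneg_right i1 (sq_nonneg (f x))]
  have hru : ∀ x ∈ D, ∀ t ∈ Ioo 0 T, (timeDeriv T R x t * f x) ^ 2 ≤ C₂ * u x 0 ^ 2 :=
    fun x hx t ht => by
      have i1 : timeDeriv T R x t ^ 2 ≤ r₁ ^ 2 := by
        rw [← sq_abs]
        exact pow_le_pow_left₀ (abs_nonneg _)
          (hr₁ (x, t) ⟨hDK hx, Ioo_subset_Icc_self ht⟩) 2
      calc (timeDeriv T R x t * f x) ^ 2 = timeDeriv T R x t ^ 2 * f x ^ 2 := by ring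
        _ ≤ r₁ ^ 2 * ((1 / r₀) ^ 2 * u x 0 ^ 2) :=
            mul_le_mul i1 (hfu x hx) (sq_nonneg _) (sq_nonneg _)
        _ = C₂ * u x 0 ^ 2 := by rw [hC₂]; ring
  have hrc : ContinuousOn (fun q : Esp (d+1) × ℝ => timeDeriv T R q.1 q.2 * f q.1)
      (closure D ×ˢ Icc 0 T) := hR'.mul (hf.comp continuousOn_fst fun q hq => hq.1)
  have etrace : ∫ t in Ioo 0 T, ∫ x' in ball (0 : Esp d) ρ₁,
      (deriv (y (graphMk d x' (ℓ x'))) t) ^ 2 * omegaW d ℓ x' =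
      ∫ t in Ioo 0 T, ∫ x' in ball (0 : Esp d) ρ₁,
        u (graphMk d x' (ℓ x')) t ^ 2 * omegaW d ℓ x' :=
    setIntegral_congr_fun measurableSet_Ioo fun t ht => by simp only [hu, timeDeriv_eq_deriv ht]
  have eenergy : ∫ t in Ioo 0 (T / 16), ∫ x in D, ((y x t) ^ 2 + (deriv (y x) t) ^ 2) =
      ∫ t in Ioo 0 (T / 16), ∫ x in D, (y x t ^ 2 + u x t ^ 2) :=
    setIntegral_congr_fun measurableSet_Ioo fun t ht => by
      simp only [hu, timeDeriv_eq_deriv (T := T) ⟨ht.1, ht.2.trans (by linarith)⟩]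
  have esup : ∫ t in Ioo 0 T, (⨆ x : D, |deriv (y (x : Esp (d+1))) t|) ^ 2 =
      ∫ t in Ioo 0 T, (⨆ x : D, |u x t|) ^ 2 :=
    setIntegral_congr_fun measurableSet_Ioo fun t ht => by simp only [hu, timeDeriv_eq_deriv ht]
  rw [esup] at hyM₀
  rw [etrace, eenergy]
  set b₂ := ∫ t in Ioo 0 T, ∫ x' in ball (0 : Esp d) ρ₁,
    u (graphMk d x' (ℓ x')) t ^ 2 * omegaW d ℓ x' with hb₂
  have hb₂0 : 0 ≤ b₂ := integral_nonneg fun t => integral_nonneg fun x' =>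
    mul_nonneg (sq_nonneg _) (omegaW_nonneg d ℓ x')
  refine holder_of_forall_exp hq0 (by positivity) (Real.sqrt_nonneg _) hs₀0.le fun s hs => ?_
  have hspos : 0 < s := hs₀0.trans_le hs
  have hsβ : (4 / T + N + 2 * M + 2) / (2 * β) ≤ s ∧ C₂ / β ≤ s := by
    have i1 : 0 ≤ (4 / T + N + 2 * M + 2) / (2 * β) := by positivity
    have i2 : 0 ≤ C₂ / β := by positivity
    constructor <;> linarith
  have hcar := carleman_estimate hDo hK (H := H) (N := N) hT hM.le measurableSet_ball hGc hGK hωint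
    (omegaW_nonneg d ℓ)
    (fun g Q hg hg0 hg1 hQ hQg => setIntegral_transport_le hρ₁ hM.le hℓ1 hℓt1 hℓtpos hℓt0 hUo hUc
      hDU hH1 hHM hDH hHν₂ hg hg0 hg1 hQ hQg)
    (ψ := psiW H) (h := h) (p := p₁) (u := u) (r := fun x t => timeDeriv T R x t * f x)
    (c := β) (C₂ := C₂) hspos hβ0
    (by have := hsβ.1; rw [div_le_iff₀ (by positivity)] at this; linarith) (sq_nonneg _)
    (by have := hsβ.2; rw [div_le_iff₀ (by positivity)] at this; linarith)
    hu1 (hψ1.continuousOn.mono hDU) (hψ1.mono (hDK.trans hDU)) hhc hψh hhβ hp₁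
    (fun x hx => hp₁b x (hDK hx)) hrc hru hupde
  have hen := energy_le_of_carleman hDo hK hT hM.le measurableSet_ball hGc hGK hωint
    (omegaW_nonneg d ℓ) hspos hβ0 (q := q) (by rw [hβ, hq]; ring) hu1.continuousOn
    (hψ1.continuousOn.mono hDU) hψq hcar
  have hlate := setIntegral_energy_le_of_iSup hT (a := 3 * T / 4) (by positivity) hne hDo hK
    hu1.continuousOn hyM₀
  set A := ∫ x in D, u x 0 ^ 2 with hA
  set E := ∫ t in Ioo 0 (T / 16), ∫ x in D, u x t ^ 2 with hE
  have hA0 : 0 ≤ A := integral_nonneg fun x => sq_nonneg _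
  have hE0 : 0 ≤ E := integral_nonneg fun t => integral_nonneg fun x => sq_nonneg _
  have hP := sqrt_le_of_weighted_energy (P := A + E) (V := V) (W := T * M) (q := q) (s := s)
    (b := √b₂) hT hV0 (by positivity) (Real.sqrt_nonneg _) (by
      rw [Real.sq_sqrt hb₂0]
      exact hen.trans (add_le_add (mul_le_mul_of_nonneg_left hlate (Real.exp_pos _).le) le_rfl))
  have hfA : √(∫ x in D, f x ^ 2) ≤ 1 / r₀ * √(A + E) := by
    have i1 : ∫ x in D, f x ^ 2 ≤ (1 / r₀) ^ 2 * A := by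
      rw [hA, ← integral_const_mul]
      refine setIntegral_mono_on (((hf.pow 2).integrableOn_compact hK).mono_set hDK)
        (Integrable.const_mul ?_ _) hDo.measurableSet hfu
      exact integrableOn_space_slice (F := fun x t => u x t ^ 2) hK hDK (hu1.continuousOn.pow 2) h0T
    calc √(∫ x in D, f x ^ 2) ≤ √((1 / r₀) ^ 2 * (A + E)) := by
          refine Real.sqrt_le_sqrt (i1.trans ?_)
          gcongr
          linarith
      _ = 1 / r₀ * √(A + E) := by
          rw [Real.sqrt_mul (by positivity), Real.sqrt_sq (by positivity)]
  have hyE : √(∫ t in Ioo 0 (T / 16), ∫ x in D, (y x t ^ 2 + u x t ^ 2)) ≤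
      √(1 + T ^ 2) * √(A + E) := by
    rw [← Real.sqrt_mul (by positivity)]
    refine Real.sqrt_le_sqrt ((setIntegral_sq_add_sq_timeDeriv_le hDo hK (by positivity)
      (by linarith) (hy.of_le (by norm_num)) hy0).trans ?_)
    gcongr
    linarith
  calc _ ≤ 1 / r₀ * √(A + E) + √(1 + T ^ 2) * √(A + E) := add_le_add hfA hyE
    _ = C₅ * √(A + E) := by rw [hC₅]; ring
    _ ≤ C₅ * (√(2 / T * (V + T * M)) *
        (Real.exp (-(3 * q * s)) + Real.exp (9 * q * s) * √b₂)) :=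
        mul_le_mul_of_nonneg_left hP hC₅0.le
    _ = _ := by ring
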